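/- arXiv:1311.5324 — 6 statements merged into one kernel-verified Lean document; each statement's English description precedes it below -/
import Mathlib

section
/- Let Λ = (λ_i) be a nondecreasing sequence of positive real numbers with ∑ 1/λ_i = +∞, let p ∈ [1,∞), let q = (q(n)) be an increasing sequence of positive reals, and let δ = (δ(n)) be an increasing unbounded sequence of positive reals. Then the inclusion ΛBV^(p) ⊆ BV(q;δ) holds if and only if limsup_{n→∞} max_{1 ≤ k ≤ δ(n)} k^{1/q(n)} / (∑_{i=1}^{k} 1/λ_i)^{1/p} < +∞ (the maximum being over integers k with 1 ≤ k ≤ δ(n)). -/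
open scoped ENNReal
open Filter

/-- A finite family of nonoverlapping subintervals of `[0,1]`, each given as its pair of
endpoints: every interval is nondegenerate, contained in `[0,1]`, and any two of them
have disjoint interiors. -/
def Nonoverlapping (n : ℕ) (I : Fin n → ℝ × ℝ) : Prop :=
  (∀ i, 0 ≤ (I i).1 ∧ (I i).1 < (I i).2 ∧ (I i).2 ≤ 1) ∧
    ∀ i j, i ≠ j → (I i).2 ≤ (I j).1 ∨ (I j).2 ≤ (I i).1

/-- The `p`-`Λ`-variation `V_{ΛBV^p}(f)` of `f : [0,1] → ℝ`, as a value in `ℝ≥0∞`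
(`Lam i` plays the role of `λ_{i+1}`). -/
noncomputable def pLamVar (Lam : ℕ → ℝ) (p : ℝ) (f : ℝ → ℝ) : ℝ≥0∞ :=
  ⨆ (n : ℕ) (I : Fin n → ℝ × ℝ) (_ : Nonoverlapping n I),
    ENNReal.ofReal ((∑ i, |f (I i).2 - f (I i).1| ^ p / Lam i) ^ (1 / p))

/-- The generalized Wiener variation `V(f, q; δ)`, as a value in `ℝ≥0∞`. -/
noncomputable def wienerVar (q δ : ℕ → ℝ) (f : ℝ → ℝ) : ℝ≥0∞ :=
  ⨆ (n : ℕ) (s : ℕ) (I : Fin s → ℝ × ℝ) (_ : Nonoverlapping s I)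
    (_ : ∀ k, 1 / δ n ≤ (I k).2 - (I k).1),
    ENNReal.ofReal ((∑ k, |f (I k).2 - f (I k).1| ^ q n) ^ (1 / q n))

lemma minkA (w : ℕ → ℝ) (r M : ℝ) (hr : 1 ≤ r) (s : ℕ) :
    ∀ y : ℕ → ℝ, Antitone y → (∀ i, 0 ≤ y i) →
    (∀ k : ℕ, 1 ≤ k → k ≤ s → (k : ℝ) ^ (1 / r) ≤ M * ∑ i ∈ Finset.range k, w i) →
    (∑ i ∈ Finset.range s, y i ^ r) ^ (1 / r) ≤ M * ∑ i ∈ Finset.range s, y i * w i := by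
  have hr0 : 0 < r := by linarith
  induction s with
  | zero =>
    intro y _ _ _
    simp [Real.zero_rpow (inv_ne_zero hr0.ne')]
  | succ s ih =>
    intro y hy hy0 hk
    set c := y s with hc
    set z : ℕ → ℝ := fun i => max (y i - c) 0 with hz
    have hzan : Antitone z := by
      intro i j hij
      exact max_le_max (by linarith [hy hij]) le_rfl
    have hz0 : ∀ i, 0 ≤ z i := fun i => le_max_right _ _
    have hzy : ∀ i ∈ Finset.range (s + 1), y i = z i + c := by
      intro i hi
      have : c ≤ y i := hy (by simpa [Nat.lt_succ_iff] using hi)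
      simp only [hz]
      rw [max_eq_left (by linarith)]
      ring
    have hzs : z s = 0 := by simp [hz, hc]
    have h1 := ih z hzan hz0 (fun k h h' => hk k h (by omega))
    have h2 := hk (s + 1) (by omega) le_rfl
    have h3 := Real.Lp_add_le_of_nonneg (Finset.range (s + 1)) (f := z) (g := fun _ => c) hr
      (fun i _ => hz0 i) (fun i _ => hy0 s)
    have h4 : ∑ i ∈ Finset.range (s + 1), y i ^ r = ∑ i ∈ Finset.range (s + 1), (z i + c) ^ r :=
      Finset.sum_congr rfl (fun i hi => by rw [hzy i hi])
    have h5 : ∑ i ∈ Finset.range (s + 1), z i ^ r = ∑ i ∈ Finset.range s, z i ^ r := by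
      rw [Finset.sum_range_succ, hzs, Real.zero_rpow hr0.ne', add_zero]
    have h6 : (∑ i ∈ Finset.range (s + 1), c ^ r) ^ (1 / r) = c * ((s + 1 : ℕ) : ℝ) ^ (1 / r) := by
      rw [Finset.sum_const, Finset.card_range, nsmul_eq_mul,
        Real.mul_rpow (by positivity) (Real.rpow_nonneg (hy0 s) _), ← Real.rpow_mul (hy0 s),
        mul_one_div_cancel hr0.ne', Real.rpow_one, mul_comm]
    have h7 : ∑ i ∈ Finset.range (s + 1), y i * w i
        = ∑ i ∈ Finset.range s, z i * w i + c * ∑ i ∈ Finset.range (s + 1), w i := by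
      have : ∑ i ∈ Finset.range s, z i * w i = ∑ i ∈ Finset.range (s + 1), z i * w i := by
        rw [Finset.sum_range_succ, hzs]; ring
      rw [this, Finset.mul_sum, ← Finset.sum_add_distrib]
      exact Finset.sum_congr rfl (fun i hi => by rw [hzy i hi]; ring)
    rw [h4, h7]
    rw [h5, h6] at h3
    have h8 := mul_le_mul_of_nonneg_left h2 (hy0 s)
    calc _ ≤ _ := h3
      _ ≤ M * ∑ i ∈ Finset.range s, z i * w i + c * (M * ∑ i ∈ Finset.range (s + 1), w i) :=
        add_le_add h1 h8
      _ = _ := by ring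

lemma lemA (w : ℕ → ℝ) (p q C : ℝ) (hw : ∀ i, 0 < w i) (hwa : Antitone w)
    (hp : 1 ≤ p) (hq : 0 < q) (hC : 0 ≤ C) (s : ℕ) (b : ℕ → ℝ) (hb : Antitone b)
    (hb0 : ∀ i, 0 ≤ b i)
    (hk : ∀ k : ℕ, 1 ≤ k → k ≤ s →
      (k : ℝ) ^ (1 / q) / (∑ i ∈ Finset.range k, w i) ^ (1 / p) ≤ C) :
    (∑ i ∈ Finset.range s, b i ^ q) ^ (1 / q)
      ≤ C * (∑ i ∈ Finset.range s, b i ^ p * w i) ^ (1 / p) := by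
  have hp0 : 0 < p := by linarith
  have hWpos : ∀ k, 1 ≤ k → 0 < ∑ i ∈ Finset.range k, w i := fun k h =>
    Finset.sum_pos (fun i _ => hw i) ⟨0, by simp; omega⟩
  have hk' : ∀ k : ℕ, 1 ≤ k → k ≤ s →
      (k : ℝ) ^ (p / q) ≤ C ^ p * ∑ i ∈ Finset.range k, w i := by
    intro k h1 h2
    have hW := hWpos k h1
    have h := (div_le_iff₀ (Real.rpow_pos_of_pos hW _)).1 (hk k h1 h2)
    have h' := Real.rpow_le_rpow (by positivity) h hp0.le
    rw [Real.mul_rpow hC (by positivity), ← Real.rpow_mul hW.le, one_div_mul_cancel hp0.ne',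
      Real.rpow_one, ← Real.rpow_mul (by positivity)] at h'
    convert h' using 2
    ring
  have hb0q : ∀ t, 0 ≤ b t ^ q := fun t => Real.rpow_nonneg (hb0 t) _
  have hb0p : ∀ t, 0 ≤ b t ^ p := fun t => Real.rpow_nonneg (hb0 t) _
  have hbp : Antitone fun i => b i ^ p := fun i j hij =>
    Real.rpow_le_rpow (hb0 j) (hb hij) hp0.le
  have hSq : 0 ≤ ∑ i ∈ Finset.range s, b i ^ q := Finset.sum_nonneg fun i _ => hb0q i
  have hT : 0 ≤ ∑ i ∈ Finset.range s, b i ^ p * w i :=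
    Finset.sum_nonneg fun i _ => mul_nonneg (hb0p i) (hw i).le
  have key : (∑ i ∈ Finset.range s, b i ^ q) ^ (p / q)
      ≤ C ^ p * ∑ i ∈ Finset.range s, b i ^ p * w i := by
    rcases le_total p q with hpq | hpq
    · have h := minkA w (q / p) (C ^ p) ((one_le_div hp0).2 hpq) s (fun i => b i ^ p) hbp hb0p
        (by intro k h1 h2; rw [one_div_div]; exact hk' k h1 h2)
      rw [one_div_div] at h
      convert h using 3 with i
      rw [← Real.rpow_mul (hb0 i)]
      congr 1
      field_simp
    · rcases Nat.eq_zero_or_pos s with rfl | hs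
      · simp [Real.zero_rpow (div_pos hp0 hq).ne']
      have h1 := Real.rpow_sum_le_const_mul_sum_rpow_of_nonneg (Finset.range s)
        (f := fun i => b i ^ q) ((one_le_div hq).2 hpq) (fun i _ => hb0q i)
      have h2 : ∑ i ∈ Finset.range s, (b i ^ q) ^ (p / q) = ∑ i ∈ Finset.range s, b i ^ p := by
        refine Finset.sum_congr rfl fun i _ => ?_
        rw [← Real.rpow_mul (hb0 i)]
        congr 1
        field_simp
      rw [h2, Finset.card_range] at h1
      have h3 := MonovaryOn.sum_mul_sum_le_card_mul_sum (s := Finset.range s)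
        (f := fun i => b i ^ p) (g := w) (by
          intro i _ j _ hij
          have : j ≤ i := by
            by_contra hcon
            exact absurd (hwa (le_of_not_ge hcon)) (not_le.2 hij)
          exact hbp this)
      rw [Finset.card_range] at h3
      have hs0 : (0 : ℝ) < s := by exact_mod_cast hs
      have h4 := hk' s hs le_rfl
      have hW := hWpos s hs
      have h5 : (s : ℝ) ^ (p / q) = (s : ℝ) ^ (p / q - 1) * s := by
        rw [Real.rpow_sub_one hs0.ne']; field_simp
      set W := ∑ i ∈ Finset.range s, w i
      set T := ∑ i ∈ Finset.range s, b i ^ p * w i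
      set B := ∑ i ∈ Finset.range s, b i ^ p
      have hR : 0 ≤ (s : ℝ) ^ (p / q - 1) := by positivity
      refine h1.trans ?_
      refine le_of_mul_le_mul_right ?_ hW
      calc (s : ℝ) ^ (p / q - 1) * B * W = (s : ℝ) ^ (p / q - 1) * (B * W) := by ring
        _ ≤ (s : ℝ) ^ (p / q - 1) * (s * T) := mul_le_mul_of_nonneg_left h3 hR
        _ = (s : ℝ) ^ (p / q) * T := by rw [h5]; ring
        _ ≤ (C ^ p * W) * T := mul_le_mul_of_nonneg_right h4 hT
        _ = C ^ p * T * W := by ring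
  have h := Real.rpow_le_rpow (by positivity) key (one_div_pos.2 hp0).le
  rw [Real.mul_rpow (by positivity) hT, ← Real.rpow_mul hC, mul_one_div_cancel hp0.ne',
    Real.rpow_one, ← Real.rpow_mul hSq] at h
  convert h using 2
  field_simp

lemma card_le (δ : ℝ) (hδ : 0 < δ) (s : ℕ) (I : Fin s → ℝ × ℝ) (hI : Nonoverlapping s I)
    (hl : ∀ k, 1 / δ ≤ (I k).2 - (I k).1) : (s : ℝ) ≤ δ := by
  have hd : Pairwise (Function.onFun Disjoint fun i => Set.Ioc (I i).1 (I i).2) := by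
    intro i j hij
    rw [Function.onFun, Set.disjoint_left]
    rintro x ⟨h1, h2⟩ ⟨h3, h4⟩
    rcases hI.2 i j hij with h | h <;> linarith
  have h1 := MeasureTheory.measure_iUnion (μ := MeasureTheory.volume) hd
    (fun i => measurableSet_Ioc)
  have h2 : MeasureTheory.volume (⋃ i, Set.Ioc (I i).1 (I i).2) ≤
      MeasureTheory.volume (Set.Icc (0 : ℝ) 1) := by
    refine MeasureTheory.measure_mono (Set.iUnion_subset fun i x hx => ?_)
    have := hI.1 i
    exact ⟨by linarith [hx.1], by linarith [hx.2]⟩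
  rw [h1, tsum_fintype] at h2
  simp only [Real.volume_Ioc, Real.volume_Icc, sub_zero] at h2
  rw [← ENNReal.ofReal_sum_of_nonneg (fun i _ => by linarith [(hI.1 i).2.1])] at h2
  have h3 := (ENNReal.ofReal_le_ofReal_iff (by norm_num)).1 h2
  have h4 : (s : ℝ) * (1 / δ) ≤ ∑ i, ((I i).2 - (I i).1) := by
    have := Finset.card_nsmul_le_sum Finset.univ (fun i => (I i).2 - (I i).1) (1 / δ)
      (fun i _ => hl i)
    simpa using this
  have h5 : (s : ℝ) * (1 / δ) ≤ 1 := h4.trans h3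
  rw [mul_one_div, div_le_one hδ] at h5
  exact h5

lemma backward (Lam q δ : ℕ → ℝ) (p C : ℝ)
    (hLpos : ∀ i, 0 < Lam i) (hLmono : Monotone Lam) (hp : 1 ≤ p)
    (hqpos : ∀ n, 0 < q n) (hδpos : ∀ n, 0 < δ n) (hC : 0 ≤ C)
    (hk : ∀ n k : ℕ, 1 ≤ k → (k : ℝ) ≤ δ n →
      (k : ℝ) ^ (1 / q n) / (∑ i ∈ Finset.range k, 1 / Lam i) ^ (1 / p) ≤ C)
    (f : ℝ → ℝ) (hf : pLamVar Lam p f < ⊤) : wienerVar q δ f < ⊤ := by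
  refine lt_of_le_of_lt (b := ENNReal.ofReal (C * (pLamVar Lam p f).toReal)) ?_
    ENNReal.ofReal_lt_top
  unfold wienerVar
  refine iSup_le fun n => iSup_le fun s => iSup_le fun I => iSup_le fun hI => iSup_le fun hl => ?_
  refine ENNReal.ofReal_le_ofReal ?_
  have hs := card_le (δ n) (hδpos n) s I hI hl
  set a : Fin s → ℝ := fun i => |f (I i).2 - f (I i).1| with ha
  set σ := Tuple.sort (fun i => - a i) with hσ
  have hmono : Antitone (a ∘ σ) := by
    intro i j hij
    have := Tuple.monotone_sort (fun i => - a i) hij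
    simp only [Function.comp, neg_le_neg_iff] at this
    exact this
  have hI' : Nonoverlapping s (I ∘ σ) :=
    ⟨fun i => hI.1 _, fun i j hij => hI.2 _ _ (fun h => hij (σ.injective h))⟩
  have hV : (∑ i, a (σ i) ^ p / Lam i) ^ (1 / p) ≤ (pLamVar Lam p f).toReal := by
    rw [← ENNReal.ofReal_le_iff_le_toReal hf.ne]
    unfold pLamVar
    exact le_iSup_of_le s (le_iSup_of_le (I ∘ σ) (le_iSup_of_le hI' le_rfl))
  let b : ℕ → ℝ := fun i => if h : i < s then a (σ ⟨i, h⟩) else 0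
  have hbσ : ∀ i : Fin s, b i = a (σ i) := fun i => by simp [b]
  have hb0 : ∀ i, 0 ≤ b i := by
    intro i
    simp only [b]
    split_ifs
    · exact abs_nonneg _
    · exact le_rfl
  have hb : Antitone b := by
    intro i j hij
    by_cases hj : j < s
    · have hi : i < s := by omega
      simp only [b, hi, hj, dif_pos]
      exact hmono (by simpa using hij)
    · have : b j = 0 := by simp [b, hj]
      rw [this]; exact hb0 i
  have h := lemA (fun i => 1 / Lam i) p (q n) C (fun i => one_div_pos.2 (hLpos i))
    (fun i j hij => one_div_le_one_div_of_le (hLpos i) (hLmono hij)) hp (hqpos n) hC s b hb hb0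
    (fun k h1 h2 => hk n k h1 ((Nat.cast_le.2 h2).trans hs))
  rw [← Fin.sum_univ_eq_sum_range (fun i => b i ^ q n),
    ← Fin.sum_univ_eq_sum_range (fun i => b i ^ p * (1 / Lam i))] at h
  simp only [hbσ, mul_one_div] at h
  rw [Equiv.sum_comp σ (fun i => a i ^ q n)] at h
  exact h.trans (mul_le_mul_of_nonneg_left hV hC)

lemma limsup_bdd (Lam q δ : ℕ → ℝ) (p : ℝ)
    (hLpos : ∀ i, 0 < Lam i)
    (h : Filter.limsup (fun n =>
        ⨆ (k : ℕ) (_ : 1 ≤ k) (_ : (k : ℝ) ≤ δ n),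
          ENNReal.ofReal ((k : ℝ) ^ (1 / q n) /
            (∑ i ∈ Finset.range k, 1 / Lam i) ^ (1 / p))) atTop < ⊤) :
    ∃ C, 0 ≤ C ∧ ∀ n k : ℕ, 1 ≤ k → (k : ℝ) ≤ δ n →
      (k : ℝ) ^ (1 / q n) / (∑ i ∈ Finset.range k, 1 / Lam i) ^ (1 / p) ≤ C := by
  obtain ⟨M, hM1, hM2⟩ := exists_between h
  have hev := Filter.eventually_lt_of_limsup_lt hM1
  obtain ⟨N, hN⟩ := eventually_atTop.1 hev
  let B : ℕ → ℝ := fun n => ∑ k ∈ Finset.range (⌊δ n⌋₊ + 1),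
    (k : ℝ) ^ (1 / q n) / (∑ i ∈ Finset.range k, 1 / Lam i) ^ (1 / p)
  have hnn : ∀ n k : ℕ, 0 ≤ (k : ℝ) ^ (1 / q n) /
      (∑ i ∈ Finset.range k, 1 / Lam i) ^ (1 / p) := fun n k =>
    div_nonneg (by positivity) (Real.rpow_nonneg
      (Finset.sum_nonneg fun i _ => (one_div_pos.2 (hLpos i)).le) _)
  have hB0 : ∀ n, 0 ≤ B n := fun n => Finset.sum_nonneg fun k _ => hnn n k
  have hS0 : 0 ≤ ∑ n ∈ Finset.range N, B n := Finset.sum_nonneg fun n _ => hB0 n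
  refine ⟨M.toReal + ∑ n ∈ Finset.range N, B n, add_nonneg ENNReal.toReal_nonneg hS0, ?_⟩
  intro n k h1 h2
  rcases lt_or_ge n N with hn | hn
  · have e1 : B n ≤ ∑ n ∈ Finset.range N, B n :=
      Finset.single_le_sum (f := B) (fun n _ => hB0 n) (Finset.mem_range.2 hn)
    have e2 := Finset.single_le_sum (f := fun k : ℕ => (k : ℝ) ^ (1 / q n) /
      (∑ i ∈ Finset.range k, 1 / Lam i) ^ (1 / p)) (s := Finset.range (⌊δ n⌋₊ + 1))
      (fun k _ => hnn n k) (Finset.mem_range.2 (Nat.lt_succ_of_le (Nat.le_floor h2)))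
    have e3 : 0 ≤ M.toReal := ENNReal.toReal_nonneg
    exact (e2.trans e1).trans (by linarith)
  · have e1 := (hN n hn).le
    have e2 := (le_iSup_of_le k (le_iSup_of_le h1 (le_iSup_of_le h2 le_rfl))).trans e1
    rw [ENNReal.ofReal_le_iff_le_toReal hM2.ne] at e2
    linarith

lemma sum_le_range (w : ℕ → ℝ) (hwa : Antitone w) (T : Finset ℕ) :
    ∑ i ∈ T, w i ≤ ∑ i ∈ Finset.range T.card, w i := by
  induction T using Finset.induction_on_max with
  | empty => simp
  | insert a s hs ih =>
    have ha : a ∉ s := fun h => lt_irrefl _ (hs a h)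
    rw [Finset.sum_insert ha, Finset.card_insert_of_notMem ha, Finset.sum_range_succ]
    have : s.card ≤ a := by
      have := Finset.card_le_card (s := s) (t := Finset.range a)
        (fun x hx => Finset.mem_range.2 (hs x hx))
      simpa using this
    linarith [hwa this]

noncomputable def gridS (m : ℕ) : Finset ℝ := (Finset.range m).image fun i : ℕ => (i : ℝ) / m

lemma gridS_card (m : ℕ) : (gridS m).card ≤ m := by
  unfold gridS
  simpa using Finset.card_image_le (s := Finset.range m) (f := fun i : ℕ => (i : ℝ) / m)

lemma gridS_sum (w : ℕ → ℝ) (hw : ∀ i, 0 < w i) (hwa : Antitone w) (m n : ℕ) (x : Fin n → ℝ)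
    (hx : Function.Injective x) :
    ∑ i, (if x i ∈ gridS m then w i else 0) ≤ ∑ i ∈ Finset.range m, w i := by
  rw [← Finset.sum_filter]
  set T := Finset.univ.filter fun i => x i ∈ gridS m
  have hT : T.card ≤ m := by
    refine le_trans ?_ (gridS_card m)
    exact Finset.card_le_card_of_injOn x (fun i hi => by simpa [T] using hi) hx.injOn
  have h1 := sum_le_range w hwa (T.map Fin.valEmbedding)
  rw [Finset.sum_map, Finset.card_map] at h1
  refine h1.trans ?_
  exact Finset.sum_le_sum_of_subset_of_nonneg (Finset.range_mono hT) (fun i _ _ => (hw i).le)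

noncomputable def bigF (c : ℕ → ℝ) (m : ℕ → ℕ) (x : ℝ) : ℝ :=
  ∑' j, if x ∈ gridS (m j) then c j else 0

lemma bigF_summable (c : ℕ → ℝ) (m : ℕ → ℕ) (hc : Summable c) (hc0 : ∀ j, 0 ≤ c j) (x : ℝ) :
    Summable fun j => if x ∈ gridS (m j) then c j else 0 := by
  refine Summable.of_nonneg_of_le (fun j => ?_) (fun j => ?_) hc
  · split_ifs
    · exact hc0 j
    · exact le_rfl
  · split_ifs
    · exact le_rfl
    · exact hc0 j

lemma bigF_nonneg (c : ℕ → ℝ) (m : ℕ → ℕ) (hc0 : ∀ j, 0 ≤ c j) (x : ℝ) : 0 ≤ bigF c m x := by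
  refine tsum_nonneg fun j => ?_
  split_ifs
  · exact hc0 j
  · exact le_rfl

lemma bigF_sum (w : ℕ → ℝ) (hw : ∀ i, 0 < w i) (hwa : Antitone w) (c : ℕ → ℝ) (m : ℕ → ℕ)
    (hc : Summable c) (hc0 : ∀ j, 0 ≤ c j)
    (hcm : ∀ j, c j * ∑ i ∈ Finset.range (m j), w i ≤ (1 / 2) ^ j) (n : ℕ) (x : Fin n → ℝ)
    (hx : Function.Injective x) : ∑ i, bigF c m (x i) * w i ≤ 2 := by
  have hs := fun i : Fin n => (bigF_summable c m hc hc0 (x i)).mul_right (w i)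
  have h1 : ∑ i, bigF c m (x i) * w i
      = ∑' j, ∑ i : Fin n, (if x i ∈ gridS (m j) then c j else 0) * w i := by
    rw [Summable.tsum_finsetSum (fun i _ => hs i)]
    exact Finset.sum_congr rfl fun i _ => by rw [tsum_mul_right]; rfl
  rw [h1, ← tsum_geometric_two]
  refine Summable.tsum_le_tsum (fun j => ?_) (summable_sum fun i _ => hs i) summable_geometric_two
  refine le_trans ?_ (hcm j)
  have h2 := mul_le_mul_of_nonneg_left (gridS_sum w hw hwa (m j) n x hx) (hc0 j)
  refine le_trans (le_of_eq ?_) h2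
  rw [Finset.mul_sum]
  refine Finset.sum_congr rfl fun i _ => ?_
  split_ifs <;> simp

lemma pLam_bigF (Lam : ℕ → ℝ) (hLpos : ∀ i, 0 < Lam i) (hLmono : Monotone Lam) (p : ℝ)
    (hp : 1 ≤ p) (c : ℕ → ℝ) (m : ℕ → ℕ)
    (hc : Summable c) (hc0 : ∀ j, 0 ≤ c j)
    (hcm : ∀ j, c j * ∑ i ∈ Finset.range (m j), 1 / Lam i ≤ (1 / 2) ^ j) :
    pLamVar Lam p (fun x => bigF c m x ^ (1 / p)) < ⊤ := by
  have hp0 : 0 < p := by linarith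
  refine lt_of_le_of_lt (b := ENNReal.ofReal (4 ^ (1 / p))) ?_ ENNReal.ofReal_lt_top
  unfold pLamVar
  refine iSup_le fun n => iSup_le fun I => iSup_le fun hI => ENNReal.ofReal_le_ofReal ?_
  refine Real.rpow_le_rpow (Finset.sum_nonneg fun i _ => div_nonneg (by positivity) (hLpos i).le)
    ?_ (one_div_pos.2 hp0).le
  have hw : ∀ i, 0 < 1 / Lam i := fun i => one_div_pos.2 (hLpos i)
  have hwa : Antitone fun i => 1 / Lam i :=
    fun i j hij => one_div_le_one_div_of_le (hLpos i) (hLmono hij)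
  have inj1 : Function.Injective fun i => (I i).1 := by
    intro i j hij
    by_contra hne
    have h1 := hI.1 i
    have h2 := hI.1 j
    simp only at hij
    rcases hI.2 i j hne with h | h <;> linarith
  have inj2 : Function.Injective fun i => (I i).2 := by
    intro i j hij
    by_contra hne
    have h1 := hI.1 i
    have h2 := hI.1 j
    simp only at hij
    rcases hI.2 i j hne with h | h <;> linarith
  have b1 := bigF_sum _ hw hwa c m hc hc0 hcm n _ inj1
  have b2 := bigF_sum _ hw hwa c m hc hc0 hcm n _ inj2
  have hpt : ∀ u v : ℝ, 0 ≤ u → 0 ≤ v → |u ^ (1 / p) - v ^ (1 / p)| ^ p ≤ v + u := by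
    intro u v hu hv
    have hu' : 0 ≤ u ^ (1 / p) := by positivity
    have hv' : 0 ≤ v ^ (1 / p) := by positivity
    have eu : (u ^ (1 / p)) ^ p = u := by
      rw [← Real.rpow_mul hu, one_div_mul_cancel hp0.ne', Real.rpow_one]
    have ev : (v ^ (1 / p)) ^ p = v := by
      rw [← Real.rpow_mul hv, one_div_mul_cancel hp0.ne', Real.rpow_one]
    rcases le_total (u ^ (1 / p)) (v ^ (1 / p)) with h | h
    · have : |u ^ (1 / p) - v ^ (1 / p)| ≤ v ^ (1 / p) := by
        rw [abs_le]; constructor <;> linarith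
      have := Real.rpow_le_rpow (abs_nonneg _) this hp0.le
      linarith
    · have : |u ^ (1 / p) - v ^ (1 / p)| ≤ u ^ (1 / p) := by
        rw [abs_le]; constructor <;> linarith
      have := Real.rpow_le_rpow (abs_nonneg _) this hp0.le
      linarith
  calc _ ≤ ∑ i : Fin n, (bigF c m (I i).1 * (1 / Lam i) + bigF c m (I i).2 * (1 / Lam i)) := by
        refine Finset.sum_le_sum fun i _ => ?_
        rw [← add_mul, mul_one_div]
        exact div_le_div_of_nonneg_right
          (hpt _ _ (bigF_nonneg c m hc0 _) (bigF_nonneg c m hc0 _)) (hLpos i).le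
    _ ≤ 4 := by rw [Finset.sum_add_distrib]; linarith

lemma bigF_irr (c : ℕ → ℝ) (m : ℕ → ℕ) (x : ℝ) (hx : Irrational x) : bigF c m x = 0 := by
  unfold bigF
  refine (tsum_congr fun j => if_neg fun h => ?_).trans tsum_zero
  simp only [gridS, Finset.mem_image] at h
  obtain ⟨i, _, rfl⟩ := h
  exact hx ⟨(i : ℚ) / (m j : ℚ), by push_cast; rfl⟩

lemma forward (Lam q δ : ℕ → ℝ) (p : ℝ)
    (hLpos : ∀ i, 0 < Lam i) (hLmono : Monotone Lam) (hp : 1 ≤ p)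
    (hqpos : ∀ n, 0 < q n) (hq : StrictMono q)
    (H : ∀ D : ℝ, ∃ n k : ℕ, 1 ≤ k ∧ (k : ℝ) ≤ δ n ∧
      D < (k : ℝ) ^ (1 / q n) / (∑ i ∈ Finset.range k, 1 / Lam i) ^ (1 / p)) :
    ∃ f : ℝ → ℝ, pLamVar Lam p f < ⊤ ∧ wienerVar q δ f = ⊤ := by
  have hp0 : 0 < p := by linarith
  set W : ℕ → ℝ := fun k => ∑ i ∈ Finset.range k, 1 / Lam i with hWdef
  have hWmono : Monotone W := fun a b hab =>
    Finset.sum_le_sum_of_subset_of_nonneg (Finset.range_mono hab)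
      (fun i _ _ => (one_div_pos.2 (hLpos i)).le)
  have hWpos : ∀ k, 1 ≤ k → 0 < W k := fun k h =>
    Finset.sum_pos (fun i _ => one_div_pos.2 (hLpos i)) ⟨0, by simp; omega⟩
  have H' : ∀ j : ℕ, ∃ n m : ℕ, 1 ≤ m ∧ ((m + 1 : ℕ) : ℝ) ≤ δ n ∧
      (4 : ℝ) ^ j < ((m + 1 : ℕ) : ℝ) ^ (1 / q n) / W (m + 1) ^ (1 / p) := by
    intro j
    have hK : 0 ≤ 1 / W 1 ^ (1 / p) :=
      one_div_nonneg.2 (Real.rpow_nonneg (hWpos 1 le_rfl).le _)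
    obtain ⟨n, k, h1, h2, h3⟩ := H (4 ^ j + 1 / W 1 ^ (1 / p))
    have hk : k ≠ 1 := by
      rintro rfl
      rw [Nat.cast_one, Real.one_rpow] at h3
      have : (0 : ℝ) < 4 ^ j := by positivity
      have h3' : (4 : ℝ) ^ j + 1 / W 1 ^ (1 / p) < 1 / W 1 ^ (1 / p) := h3
      linarith
    obtain ⟨m, rfl⟩ : ∃ m, k = m + 1 := ⟨k - 1, by omega⟩
    refine ⟨n, m, by omega, h2, lt_of_le_of_lt ?_ h3⟩
    linarith
  choose N m hm hδm hval using H'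
  set c : ℕ → ℝ := fun j => (1 / 2) ^ j / W (m j) with hcdef
  have hc0 : ∀ j, 0 ≤ c j := fun j => div_nonneg (by positivity) (hWpos _ (hm j)).le
  have hc : Summable c := by
    refine Summable.of_nonneg_of_le hc0 (fun j => ?_) (summable_geometric_two.div_const (W 1))
    exact div_le_div_of_nonneg_left (by positivity) (hWpos 1 le_rfl) (hWmono (hm j))
  have hcm : ∀ j, c j * ∑ i ∈ Finset.range (m j), 1 / Lam i ≤ (1 / 2) ^ j := fun j =>
    (div_mul_cancel₀ _ (hWpos _ (hm j)).ne').le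
  refine ⟨_, pLam_bigF Lam hLpos hLmono p hp c m hc hc0 hcm, ?_⟩
  by_contra hne
  set f : ℝ → ℝ := fun x => bigF c m x ^ (1 / p) with hf
  have hlow : ∀ j : ℕ, (2 : ℝ) ^ j * (1 / 2) ^ (1 / q 0) ≤ (wienerVar q δ f).toReal := by
    intro j
    have hm0 : (0 : ℝ) < m j := by exact_mod_cast hm j
    have hq0 := hqpos (N j)
    obtain ⟨η, hη, hη1, hη2⟩ := exists_irrational_btwn
      (x := 1 / ((m j + 1 : ℕ) : ℝ)) (y := 1 / (m j : ℝ))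
      (one_div_lt_one_div_of_lt hm0 (by push_cast; linarith))
    have hη0 : 0 < η := lt_trans (by positivity) hη1
    let I : Fin (m j) → ℝ × ℝ := fun i => ((i : ℕ) / (m j : ℝ), (i : ℕ) / (m j : ℝ) + η)
    have hord : ∀ a b : ℕ, a < b → (a : ℝ) / m j + η ≤ (b : ℝ) / m j := by
      intro a b hab
      have : (a : ℝ) + 1 ≤ b := by exact_mod_cast hab
      calc (a : ℝ) / m j + η ≤ (a : ℝ) / m j + 1 / m j := by linarith
        _ = ((a : ℝ) + 1) / m j := by ring
        _ ≤ _ := div_le_div_of_nonneg_right this hm0.le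
    have hI : Nonoverlapping (m j) I := by
      refine ⟨fun i => ⟨by simp only [I]; positivity, by simp only [I]; linarith, ?_⟩, ?_⟩
      · have := hord i (m j) i.2
        rwa [div_self hm0.ne'] at this
      · intro a b hab
        rcases lt_or_gt_of_ne hab with h | h
        · exact Or.inl (hord a b h)
        · exact Or.inr (hord b a h)
    have hl : ∀ k, 1 / δ (N j) ≤ (I k).2 - (I k).1 := by
      intro k
      have : 1 / δ (N j) ≤ 1 / ((m j + 1 : ℕ) : ℝ) :=
        one_div_le_one_div_of_le (by positivity) (hδm j)
      simp only [I]
      linarith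
    have hsup : (∑ k, |f (I k).2 - f (I k).1| ^ q (N j)) ^ (1 / q (N j))
        ≤ (wienerVar q δ f).toReal := by
      rw [← ENNReal.ofReal_le_iff_le_toReal hne]
      unfold wienerVar
      exact le_iSup_of_le (N j) (le_iSup_of_le (m j) (le_iSup_of_le I
        (le_iSup_of_le hI (le_iSup_of_le hl le_rfl))))
    have hpt : ∀ k, c j ^ (1 / p) ≤ |f (I k).2 - f (I k).1| := by
      intro k
      have e1 : f (I k).2 = 0 := by
        have hir : Irrational (I k).2 := by
          have := hη.ratCast_add ((k : ℕ) / (m j : ℚ))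
          push_cast at this
          exact this
        simp only [hf]
        rw [bigF_irr c m _ hir, Real.zero_rpow (one_div_pos.2 hp0).ne']
      have e2 : c j ≤ bigF c m (I k).1 := by
        have hmem : (I k).1 ∈ gridS (m j) :=
          Finset.mem_image.2 ⟨k, Finset.mem_range.2 k.2, rfl⟩
        have := (bigF_summable c m hc hc0 (I k).1).le_tsum j (fun i _ => by
          split_ifs
          · exact hc0 i
          · exact le_rfl)
        rw [if_pos hmem] at this
        exact this
      rw [e1, zero_sub, abs_neg]
      exact (Real.rpow_le_rpow (hc0 j) e2 (one_div_pos.2 hp0).le).trans (le_abs_self _)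
    have hcp : 0 ≤ c j ^ (1 / p) := Real.rpow_nonneg (hc0 j) _
    have hsum : (m j : ℝ) ^ (1 / q (N j)) * c j ^ (1 / p)
        ≤ (∑ k, |f (I k).2 - f (I k).1| ^ q (N j)) ^ (1 / q (N j)) := by
      have e1 : (m j : ℝ) * (c j ^ (1 / p)) ^ q (N j)
          ≤ ∑ k, |f (I k).2 - f (I k).1| ^ q (N j) := by
        have := Finset.card_nsmul_le_sum Finset.univ
          (fun k => |f (I k).2 - f (I k).1| ^ q (N j)) ((c j ^ (1 / p)) ^ q (N j))
          (fun k _ => Real.rpow_le_rpow hcp (hpt k) hq0.le)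
        simpa only [Finset.card_univ, Fintype.card_fin, nsmul_eq_mul] using this
      have e2 := Real.rpow_le_rpow (by positivity) e1 (one_div_pos.2 hq0).le
      rwa [Real.mul_rpow hm0.le (by positivity), ← Real.rpow_mul hcp,
        mul_one_div_cancel hq0.ne', Real.rpow_one] at e2
    refine le_trans ?_ (hsum.trans hsup)
    have hW1 := hWpos _ (hm j)
    have hW2 := hWpos (m j + 1) (by omega)
    have a1 : ((m j + 1 : ℕ) : ℝ) ^ (1 / q (N j)) * (1 / 2) ^ (1 / q 0)
        ≤ (m j : ℝ) ^ (1 / q (N j)) := by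
      have b1 : ((1 : ℝ) / 2) ^ (1 / q 0) ≤ (1 / 2) ^ (1 / q (N j)) :=
        Real.rpow_le_rpow_of_exponent_ge (by norm_num) (by norm_num)
          (one_div_le_one_div_of_le (hqpos 0) (hq.monotone (Nat.zero_le _)))
      refine (mul_le_mul_of_nonneg_left b1 (by positivity)).trans ?_
      rw [← Real.mul_rpow (by positivity) (by norm_num)]
      refine Real.rpow_le_rpow (by positivity) ?_ (one_div_pos.2 hq0).le
      have : (1 : ℝ) ≤ m j := by exact_mod_cast hm j
      push_cast
      linarith
    have a2 : (1 / 2 : ℝ) ^ j / W (m j + 1) ^ (1 / p) ≤ c j ^ (1 / p) := by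
      simp only [hcdef]
      rw [Real.div_rpow (by positivity) hW1.le]
      refine div_le_div₀ (by positivity) ?_ (by positivity)
        (Real.rpow_le_rpow hW1.le (hWmono (Nat.le_succ _)) (one_div_pos.2 hp0).le)
      have := Real.rpow_le_rpow_of_exponent_ge (x := (1 / 2 : ℝ) ^ j) (y := 1) (z := 1 / p)
        (by positivity) (pow_le_one₀ (by norm_num) (by norm_num))
        ((div_le_one hp0).2 hp)
      rwa [Real.rpow_one] at this
    have a3 := (hval j).le
    calc (2 : ℝ) ^ j * (1 / 2) ^ (1 / q 0)
        = 4 ^ j * ((1 / 2) ^ j * (1 / 2) ^ (1 / q 0)) := by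
          rw [← mul_assoc, ← mul_pow]; norm_num
      _ ≤ (((m j + 1 : ℕ) : ℝ) ^ (1 / q (N j)) / W (m j + 1) ^ (1 / p))
          * ((1 / 2) ^ j * (1 / 2) ^ (1 / q 0)) :=
          mul_le_mul_of_nonneg_right a3 (by positivity)
      _ = (((m j + 1 : ℕ) : ℝ) ^ (1 / q (N j)) * (1 / 2) ^ (1 / q 0))
          * ((1 / 2 : ℝ) ^ j / W (m j + 1) ^ (1 / p)) := by ring
      _ ≤ _ := mul_le_mul a1 a2 (by positivity) (by positivity)
  have hpos : (0 : ℝ) < (1 / 2) ^ (1 / q 0) := by positivity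
  obtain ⟨j, hj⟩ := pow_unbounded_of_one_lt ((wienerVar q δ f).toReal / (1 / 2) ^ (1 / q 0))
    (one_lt_two (α := ℝ))
  rw [div_lt_iff₀ hpos] at hj
  exact absurd (hlow j) (not_le.2 hj)

/-- **Theorem 1.** For `p ∈ [1,∞)`, a `Λ`-sequence `Λ`, an increasing positive sequence `q`
and an increasing unbounded positive sequence `δ`, the inclusion `ΛBV^(p) ⊆ BV(q;δ)` holds
if and only if `limsup_{n→∞} max_{1 ≤ k ≤ δ(n)} k^{1/q(n)} / (∑_{i=1}^k 1/λ_i)^{1/p} < ∞`. -/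
theorem inclusion_iff
    (Lam q δ : ℕ → ℝ) (p : ℝ)
    (hLpos : ∀ i, 0 < Lam i) (hLmono : Monotone Lam)
    (hLdiv : Tendsto (fun n => ∑ i ∈ Finset.range n, 1 / Lam i) atTop atTop)
    (hp : 1 ≤ p)
    (hqpos : ∀ n, 0 < q n) (hq : StrictMono q)
    (hδpos : ∀ n, 0 < δ n) (hδ : StrictMono δ)
    (hδunbdd : Tendsto δ atTop atTop) :
    (∀ f : ℝ → ℝ, pLamVar Lam p f < ⊤ → wienerVar q δ f < ⊤) ↔
      Filter.limsup (fun n =>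
        ⨆ (k : ℕ) (_ : 1 ≤ k) (_ : (k : ℝ) ≤ δ n),
          ENNReal.ofReal ((k : ℝ) ^ (1 / q n) /
            (∑ i ∈ Finset.range k, 1 / Lam i) ^ (1 / p))) atTop < ⊤ := by
  constructor
  · intro hinc
    by_contra hlim
    obtain ⟨f, hf1, hf2⟩ := forward Lam q δ p hLpos hLmono hp hqpos hq (by
      intro D
      by_contra hcon
      push Not at hcon
      apply hlim
      refine lt_of_le_of_lt (b := ENNReal.ofReal D) ?_ ENNReal.ofReal_lt_top
      refine Filter.limsup_le_of_le (h := Filter.Eventually.of_forall fun n => ?_)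
      exact iSup_le fun k => iSup_le fun h1 => iSup_le fun h2 =>
        ENNReal.ofReal_le_ofReal (hcon n k h1 h2))
    exact absurd hf2 (hinc f hf1).ne
  · intro hlim f hf
    obtain ⟨C, hC, hk⟩ := limsup_bdd Lam q δ p hLpos hlim
    exact backward Lam q δ p C hLpos hLmono hp hqpos hδpos hC hk f hf
end

section
/- Let Λ = (λ_i) be a nondecreasing sequence of positive real numbers with ∑ 1/λ_i = +∞, let p ∈ [1,∞), let q = (q(n)) be an increasing sequence of positive reals, and let δ = (δ(n)) be an increasing unbounded sequence of positive reals. Then for every function f : [0,1] → ℝ of bounded p-Λ-variation, V(f,q;δ) ≤ V_{ΛBV^p}(f) · sup_{n≥1} max_{1 ≤ k ≤ δ(n)} ( k / (∑_{i=1}^{k} 1/λ_i)^{q(n)/p} )^{1/q(n)}. In particular, if sup_{n≥1} max_{1 ≤ k ≤ δ(n)} k^{1/q(n)} / (∑_{i=1}^{k} 1/λ_i)^{1/p} is finite, then ΛBV^(p) ⊆ BV(q;δ). -/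
open scoped ENNReal
open Filter

lemma vb_card_le (s : ℕ) (I : Fin s → ℝ × ℝ) (h : Nonoverlapping s I) :
    ∑ k, ((I k).2 - (I k).1) ≤ 1 := by
  classical
  have hd : Pairwise (Function.onFun Disjoint fun k => Set.Ioo (I k).1 (I k).2) := by
    intro i j hij
    refine Set.disjoint_left.2 fun x hx hy => ?_
    rcases h.2 i j hij with h1 | h1
    · linarith [hx.2, hy.1]
    · linarith [hx.1, hy.2]
  have h1 : MeasureTheory.volume (⋃ k, Set.Ioo (I k).1 (I k).2)
      ≤ MeasureTheory.volume (Set.Icc (0:ℝ) 1) := by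
    apply MeasureTheory.measure_mono
    refine Set.iUnion_subset fun k x hx => ⟨?_, ?_⟩
    · linarith [(h.1 k).1, hx.1]
    · linarith [(h.1 k).2.2, hx.2]
  rw [MeasureTheory.measure_iUnion hd (fun _ => measurableSet_Ioo), tsum_fintype] at h1
  simp only [Real.volume_Ioo, Real.volume_Icc] at h1
  rw [← ENNReal.ofReal_sum_of_nonneg (fun k _ => by linarith [(h.1 k).2.1])] at h1
  simpa using h1

lemma vb_conv (w : ℕ → ℝ) (r C : ℝ) (hr : 1 ≤ r) (n : ℕ)
    (hC : ∀ k : ℕ, 1 ≤ k → k ≤ n → (k : ℝ) ^ (1 / r) ≤ C * ∑ i ∈ Finset.range k, w i)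
    (x : Fin n → ℝ) (hx : ∀ i, 0 ≤ x i) (hanti : Antitone x) :
    (∑ i, x i ^ r) ^ (1 / r) ≤ C * ∑ i, x i * w i := by
  have hr0 : 0 < r := by linarith
  induction n with
  | zero =>
    simp [Real.zero_rpow (inv_ne_zero hr0.ne')]
  | succ n ih =>
    set c := x (Fin.last n) with hc
    have hcx : ∀ i, c ≤ x i := fun i => hanti (Fin.le_last i)
    have hc0 : 0 ≤ c := hx _
    have key := Real.Lp_add_le_of_nonneg (s := Finset.univ) (f := fun i => x i - c)
      (g := fun _ : Fin (n+1) => c) hr (fun i _ => sub_nonneg.2 (hcx i)) (fun i _ => hc0)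
    have h1 := ih (fun k h1 h2 => hC k h1 (by omega)) (fun i => x i.castSucc - c)
      (fun i => sub_nonneg.2 (hcx _))
      (fun i j hij => sub_le_sub_right (hanti (Fin.castSucc_le_castSucc_iff.2 hij)) c)
    have h2 : ∑ i, (x i - c) ^ r = ∑ i : Fin n, (x i.castSucc - c) ^ r := by
      rw [Fin.sum_univ_castSucc, ← hc]
      simp [Real.zero_rpow hr0.ne']
    have h3 : (∑ i : Fin (n+1), c ^ r) ^ (1 / r) = c * ((n+1 : ℕ) : ℝ) ^ (1 / r) := by
      simp only [Finset.sum_const, Finset.card_univ, Fintype.card_fin, nsmul_eq_mul]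
      rw [Real.mul_rpow (by positivity) (by positivity), ← Real.rpow_mul hc0,
        mul_one_div_cancel hr0.ne', Real.rpow_one, mul_comm]
    have h4 := mul_le_mul_of_nonneg_left (hC (n+1) (by omega) le_rfl) hc0
    rw [h2, h3] at key
    simp only [sub_add_cancel] at key
    have h5 : C * ∑ i, x i * w i = C * ∑ i : Fin n, (x i.castSucc - c) * w i
        + c * (C * ∑ i ∈ Finset.range (n+1), w i) := by
      rw [← Fin.sum_univ_eq_sum_range, Fin.sum_univ_castSucc, Fin.sum_univ_castSucc]
      simp only [sub_mul, Finset.sum_sub_distrib, ← Finset.mul_sum, Fin.val_castSucc,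
        Fin.val_last, ← hc]
      ring
    rw [h5]
    linarith

lemma vb_core (w : ℕ → ℝ) (hw : ∀ i, 0 < w i) (hwa : Antitone w) (r : ℝ) (hr : 0 < r) (n : ℕ)
    (hn : 1 ≤ n) (x : Fin n → ℝ) (hx : ∀ i, 0 ≤ x i) (hanti : Antitone x) :
    ∃ k : ℕ, 1 ≤ k ∧ k ≤ n ∧ (∑ i, x i ^ r) ^ (1 / r) ≤
      (k : ℝ) ^ (1 / r) / (∑ i ∈ Finset.range k, w i) * ∑ i, x i * w i := by
  have hS : ∀ k : ℕ, 1 ≤ k → 0 < ∑ i ∈ Finset.range k, w i := fun k hk =>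
    Finset.sum_pos (fun i _ => hw i) ⟨0, Finset.mem_range.2 hk⟩
  rcases le_total 1 r with h1 | h1
  · obtain ⟨k, hk, hmax⟩ := Finset.exists_max_image (Finset.Icc 1 n)
      (fun k : ℕ => (k : ℝ) ^ (1 / r) / (∑ i ∈ Finset.range k, w i)) ⟨1, by simpa using hn⟩
    rw [Finset.mem_Icc] at hk
    refine ⟨k, hk.1, hk.2, vb_conv w r _ h1 n (fun j hj1 hj2 => ?_) x hx hanti⟩
    rw [← div_le_iff₀ (hS j hj1)]
    exact hmax j (Finset.mem_Icc.2 ⟨hj1, hj2⟩)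
  · refine ⟨n, hn, le_rfl, ?_⟩
    have hr1 : 1 ≤ 1 / r := by rw [le_div_iff₀ hr]; linarith
    have a1 := Real.rpow_sum_le_const_mul_sum_rpow (s := Finset.univ) (f := fun i => x i ^ r) hr1
    have a2 : ∀ i, |x i ^ r| = x i ^ r := fun i => abs_of_nonneg (Real.rpow_nonneg (hx i) _)
    have a3 : ∀ i, (x i ^ r) ^ (1 / r) = x i := fun i => by
      rw [← Real.rpow_mul (hx i), mul_one_div_cancel hr.ne', Real.rpow_one]
    simp only [a2, a3, Finset.card_univ, Fintype.card_fin] at a1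
    have hmv : Monovary x (fun i : Fin n => w i) :=
      hanti.monovary (fun i j hij => hwa hij)
    have a4 := hmv.sum_mul_sum_le_card_mul_sum
    rw [Fin.sum_univ_eq_sum_range (fun i => w i), Fintype.card_fin] at a4
    have hnp : (0:ℝ) < n := by exact_mod_cast hn
    refine a1.trans ?_
    rw [Real.rpow_sub hnp, Real.rpow_one, div_mul_eq_mul_div, div_mul_eq_mul_div,
      div_le_div_iff₀ hnp (hS n hn)]
    have := mul_le_mul_of_nonneg_left a4 (Real.rpow_nonneg hnp.le (1 / r))
    linarith

lemma vb_g (k S p q : ℝ) (hk : 0 ≤ k) (hS : 0 < S) (hq : 0 < q) :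
    (k / S ^ (q / p)) ^ (1 / q) = k ^ (1 / q) / S ^ (1 / p) := by
  rw [Real.div_rpow hk (by positivity), ← Real.rpow_mul hS.le]
  congr 2
  field_simp

lemma vb_core' (Lam : ℕ → ℝ) (hLpos : ∀ i, 0 < Lam i) (hLmono : Monotone Lam)
    (p q : ℝ) (hp : 0 < p) (hq : 0 < q) (n : ℕ)
    (hn : 1 ≤ n) (a : Fin n → ℝ) (ha : ∀ i, 0 ≤ a i) (hanti : Antitone a) :
    ∃ k : ℕ, 1 ≤ k ∧ k ≤ n ∧ (∑ i, a i ^ q) ^ (1 / q) ≤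
      (∑ i, a i ^ p / Lam i) ^ (1 / p) *
      ((k : ℝ) / (∑ i ∈ Finset.range k, 1 / Lam i) ^ (q / p)) ^ (1 / q) := by
  obtain ⟨k, hk1, hk2, h⟩ := vb_core (fun i => 1 / Lam i) (fun i => one_div_pos.2 (hLpos i))
    (fun i j hij => one_div_le_one_div_of_le (hLpos i) (hLmono hij)) (q / p) (div_pos hq hp) n hn
    (fun i => a i ^ p) (fun i => Real.rpow_nonneg (ha i) _)
    (fun i j hij => Real.rpow_le_rpow (ha j) (hanti hij) hp.le)
  refine ⟨k, hk1, hk2, ?_⟩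
  have hS : 0 < ∑ i ∈ Finset.range k, 1 / Lam i :=
    Finset.sum_pos (fun i _ => one_div_pos.2 (hLpos i)) ⟨0, Finset.mem_range.2 hk1⟩
  rw [vb_g _ _ _ _ (Nat.cast_nonneg k) hS hq]
  have e1 : ∀ i, (a i ^ p) ^ (q / p) = a i ^ q := fun i => by
    rw [← Real.rpow_mul (ha i)]; congr 1; field_simp
  simp only [e1, mul_one_div] at h
  have hA : 0 ≤ ∑ i, a i ^ q := Finset.sum_nonneg fun i _ => Real.rpow_nonneg (ha i) _
  have hB : 0 ≤ ∑ i : Fin n, a i ^ p / Lam i :=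
    Finset.sum_nonneg fun i _ => div_nonneg (Real.rpow_nonneg (ha i) _) (hLpos i).le
  have h' := Real.rpow_le_rpow (Real.rpow_nonneg hA _) h (one_div_pos.2 hp).le
  rw [← Real.rpow_mul hA, Real.mul_rpow (by positivity) hB, Real.div_rpow (by positivity) hS.le,
    ← Real.rpow_mul (Nat.cast_nonneg k)] at h'
  have e2 : 1 / (q / p) * (1 / p) = 1 / q := by field_simp
  rw [e2] at h'
  linarith

/-- **Sufficiency, quantitative form.** For every `f` of bounded `p`-`Λ`-variation,
`V(f,q;δ) ≤ V_{ΛBV^p}(f) · sup_{n} max_{1 ≤ k ≤ δ(n)} (k / (∑_{i=1}^k 1/λ_i)^{q(n)/p})^{1/q(n)}`.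
In particular, if `sup_{n} max_{1 ≤ k ≤ δ(n)} k^{1/q(n)} / (∑_{i=1}^k 1/λ_i)^{1/p}` is finite,
then `ΛBV^(p) ⊆ BV(q;δ)`. -/
theorem variation_bound
    (Lam q δ : ℕ → ℝ) (p : ℝ)
    (hLpos : ∀ i, 0 < Lam i) (hLmono : Monotone Lam)
    (hLdiv : Tendsto (fun n => ∑ i ∈ Finset.range n, 1 / Lam i) atTop atTop)
    (hp : 1 ≤ p)
    (hqpos : ∀ n, 0 < q n) (hq : StrictMono q)
    (hδpos : ∀ n, 0 < δ n) (hδ : StrictMono δ)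
    (hδunbdd : Tendsto δ atTop atTop) :
    (∀ f : ℝ → ℝ, pLamVar Lam p f < ⊤ →
      wienerVar q δ f ≤ pLamVar Lam p f *
        ⨆ (n : ℕ) (k : ℕ) (_ : 1 ≤ k) (_ : (k : ℝ) ≤ δ n),
          ENNReal.ofReal (((k : ℝ) /
            (∑ i ∈ Finset.range k, 1 / Lam i) ^ (q n / p)) ^ (1 / q n))) ∧
    ((⨆ (n : ℕ) (k : ℕ) (_ : 1 ≤ k) (_ : (k : ℝ) ≤ δ n),
        ENNReal.ofReal ((k : ℝ) ^ (1 / q n) /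
          (∑ i ∈ Finset.range k, 1 / Lam i) ^ (1 / p))) < ⊤ →
      ∀ f : ℝ → ℝ, pLamVar Lam p f < ⊤ → wienerVar q δ f < ⊤) := by
  have hp0 : 0 < p := by linarith
  have main : ∀ f : ℝ → ℝ, 
      wienerVar q δ f ≤ pLamVar Lam p f *
        ⨆ (n : ℕ) (k : ℕ) (_ : 1 ≤ k) (_ : (k : ℝ) ≤ δ n),
          ENNReal.ofReal (((k : ℝ) /
            (∑ i ∈ Finset.range k, 1 / Lam i) ^ (q n / p)) ^ (1 / q n)) := by
    intro f
    unfold wienerVar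
    refine iSup_le fun n => iSup_le fun s => iSup_le fun I => iSup_le fun hI => iSup_le fun hlen => ?_
    rcases Nat.eq_zero_or_pos s with rfl | hs
    · simp [Real.zero_rpow (inv_ne_zero (hqpos n).ne')]
    have hsδ : (s : ℝ) ≤ δ n := by
      have h1 := Finset.sum_le_sum (s := Finset.univ) fun k _ => hlen k
      have h2 := h1.trans (vb_card_le s I hI)
      simp only [Finset.sum_const, Finset.card_univ, Fintype.card_fin, nsmul_eq_mul] at h2
      rw [mul_one_div, div_le_one (hδpos n)] at h2
      exact h2
    set σ := Tuple.sort (fun k => -|f (I k).2 - f (I k).1|) with hσ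
    have hmono : Monotone ((fun k => -|f (I k).2 - f (I k).1|) ∘ σ) := Tuple.monotone_sort _
    obtain ⟨k, hk1, hk2, h⟩ := vb_core' Lam hLpos hLmono p (q n) hp0 (hqpos n) s hs
      (fun i => |f (I (σ i)).2 - f (I (σ i)).1|) (fun i => abs_nonneg _)
      (fun i j hij => neg_le_neg_iff.1 (hmono hij))
    rw [Equiv.sum_comp σ (fun i => |f (I i).2 - f (I i).1| ^ q n)] at h
    refine (ENNReal.ofReal_le_ofReal h).trans ?_
    have hnn : 0 ≤ (∑ i : Fin s, |f (I (σ i)).2 - f (I (σ i)).1| ^ p / Lam i) ^ (1 / p) :=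
      Real.rpow_nonneg (Finset.sum_nonneg fun (i : Fin s) _ =>
        div_nonneg (Real.rpow_nonneg (abs_nonneg _) _) (hLpos i).le) _
    rw [ENNReal.ofReal_mul hnn]
    have hIσ : Nonoverlapping s (fun i => I (σ i)) :=
      ⟨fun i => hI.1 (σ i), fun i j hij => hI.2 _ _ (σ.injective.ne hij)⟩
    refine mul_le_mul' ?_ ?_
    · unfold pLamVar
      exact le_iSup_of_le s (le_iSup_of_le (fun i => I (σ i)) (le_iSup_of_le hIσ le_rfl))
    · exact le_iSup_of_le n (le_iSup_of_le k (le_iSup_of_le hk1 (le_iSup_of_le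
        ((Nat.cast_le.2 hk2).trans hsδ) le_rfl)))
  refine ⟨fun f _ => main f, fun hfin f hf => (main f).trans_lt (ENNReal.mul_lt_top hf ?_)⟩
  refine lt_of_le_of_lt (le_of_eq ?_) hfin
  refine iSup_congr fun n => iSup_congr fun k => iSup_congr fun hk => iSup_congr fun _ => ?_
  rw [vb_g _ _ _ _ (Nat.cast_nonneg k) (Finset.sum_pos (fun i _ => one_div_pos.2 (hLpos i))
    ⟨0, Finset.mem_range.2 hk⟩) (hqpos n)]
end

section
/- Let Λ = (λ_i) be a nondecreasing sequence of positive real numbers with ∑ 1/λ_i = +∞, let p ∈ [1,∞), let q = (q(n)) be an increasing sequence of positive reals, and let δ = (δ(n)) be an increasing unbounded sequence of positive reals. If limsup_{n→∞} max_{1 ≤ k ≤ δ(n)} k^{1/q(n)} / (∑_{i=1}^{k} 1/λ_i)^{1/p} = +∞, then there exists a function g : [0,1] → ℝ of bounded p-Λ-variation such that g does not belong to BV(q;δ); that is, the inclusion ΛBV^(p) ⊆ BV(q;δ) fails. -/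
open scoped ENNReal
open Filter

theorem aux_sum_le (w : ℕ → ℝ) (hw : Antitone w) (T : Finset ℕ) :
    ∑ i ∈ T, w i ≤ ∑ i ∈ Finset.range T.card, w i := by
  induction T using Finset.induction_on_max with
  | empty => simp
  | insert a s h ih =>
    have ha : a ∉ s := fun h' => lt_irrefl _ (h a h')
    rw [Finset.sum_insert ha, Finset.card_insert_of_notMem ha, Finset.sum_range_succ]
    have hc : s.card ≤ a := by
      have : s ⊆ Finset.range a := fun x hx => Finset.mem_range.2 (h x hx)
      simpa using Finset.card_le_card this
    linarith [hw hc]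

theorem aux_count (n : ℕ) (I : Fin n → ℝ × ℝ) (hI : Nonoverlapping n I) (t : ℝ → ℕ)
    (ht : Monotone t) (k : ℕ) (hk : ∀ x, t x ≤ k) :
    (Finset.univ.filter (fun i => t (I i).1 ≠ t (I i).2)).card ≤ k := by
  have hlt : ∀ i, t (I i).1 ≠ t (I i).2 → t (I i).1 < t (I i).2 := fun i hi =>
    lt_of_le_of_ne (ht (hI.1 i).2.1.le) hi
  calc _ ≤ (Finset.Icc 1 k).card := by
        apply Finset.card_le_card_of_injOn (fun i => t (I i).2)
        · intro i hi
          have := hlt i (by simpa using hi)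
          simp only [Finset.coe_Icc, Set.mem_Icc]
          exact ⟨by omega, hk _⟩
        · intro i hi j hj hij
          by_contra hne
          have h1 := hlt i (by simpa using hi)
          have h2 := hlt j (by simpa using hj)
          simp only at hij
          rcases hI.2 i j hne with h | h
          · have := ht h; omega
          · have := ht h; omega
    _ = k := by simp

/-- the counting function of the `j`-th oscillation -/
noncomputable def auxT (D : ℝ) (k : ℕ) (x : ℝ) : ℕ := min ⌊x * D⌋₊ k

/-- the oscillating step function -/
noncomputable def auxF (D : ℝ) (k : ℕ) (a : ℝ) (x : ℝ) : ℝ := a * ((auxT D k x % 2 : ℕ) : ℝ)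

theorem auxT_mono (D : ℝ) (hD : 0 < D) (k : ℕ) : Monotone (auxT D k) := by
  intro x y hxy
  unfold auxT
  exact min_le_min_right _ (Nat.floor_mono (by gcongr))

theorem auxT_le (D : ℝ) (k : ℕ) (x : ℝ) : auxT D k x ≤ k := min_le_right _ _

theorem auxT_at (D : ℝ) (hD : 0 < D) (k i : ℕ) (hi : i ≤ k) : auxT D k (i / D) = i := by
  unfold auxT
  rw [div_mul_cancel₀ _ hD.ne', Nat.floor_natCast, min_eq_left hi]

theorem auxF_diff (D : ℝ) (k : ℕ) (a : ℝ) (ha : 0 ≤ a) (x y : ℝ) :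
    |auxF D k a y - auxF D k a x| ≤ a := by
  unfold auxF
  rcases Nat.mod_two_eq_zero_or_one (auxT D k x) with h | h <;>
  rcases Nat.mod_two_eq_zero_or_one (auxT D k y) with h' | h' <;>
  simp [h, h', abs_of_nonneg ha, ha]

theorem auxF_bd (D : ℝ) (k : ℕ) (a : ℝ) (ha : 0 ≤ a) (x : ℝ) :
    |auxF D k a x| ≤ a := by
  unfold auxF
  rcases Nat.mod_two_eq_zero_or_one (auxT D k x) with h | h <;>
  simp [h, abs_of_nonneg ha, ha]

theorem auxF_step (D : ℝ) (hD : 0 < D) (k : ℕ) (a : ℝ) (ha : 0 ≤ a) (i : ℕ) (hi : i < k) :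
    |auxF D k a ((i + 1 : ℕ) / D) - auxF D k a (i / D)| = a := by
  unfold auxF
  rw [auxT_at D hD k _ hi, auxT_at D hD k _ hi.le]
  rcases Nat.mod_two_eq_zero_or_one i with h | h
  · have : (i + 1) % 2 = 1 := by omega
    simp [h, this, abs_of_nonneg ha]
  · have : (i + 1) % 2 = 0 := by omega
    simp [h, this, abs_of_nonneg ha]

theorem auxF_var (Lam : ℕ → ℝ) (p : ℝ) (hLpos : ∀ i, 0 < Lam i) (hLmono : Monotone Lam)
    (hp : 1 ≤ p) (D : ℝ) (hD : 0 < D) (k : ℕ) (a : ℝ) (ha : 0 ≤ a)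
    (hak : a ^ p * ∑ i ∈ Finset.range k, 1 / Lam i ≤ 1)
    (n : ℕ) (I : Fin n → ℝ × ℝ) (hI : Nonoverlapping n I) :
    ∑ i, |auxF D k a (I i).2 - auxF D k a (I i).1| ^ p / Lam i ≤ 1 := by
  have hw : Antitone (fun i => 1 / Lam i) := fun i j hij =>
    one_div_le_one_div_of_le (hLpos i) (hLmono hij)
  set T := Finset.univ.filter (fun i => auxT D k (I i).1 ≠ auxT D k (I i).2) with hT
  have hc : T.card ≤ k := aux_count n I hI _ (auxT_mono D hD k) k (auxT_le D k)
  have h1 : ∑ i, |auxF D k a (I i).2 - auxF D k a (I i).1| ^ p / Lam i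
      ≤ ∑ i ∈ T, a ^ p * (1 / Lam i) := by
    rw [hT, Finset.sum_filter]
    apply Finset.sum_le_sum
    intro i _
    split_ifs with h
    · rw [mul_one_div]
      have := hLpos i
      have := auxF_diff D k a ha (I i).1 (I i).2
      gcongr
    · push Not at h
      simp [auxF, h, Real.zero_rpow (by linarith : p ≠ 0)]
  have h2 : ∑ i ∈ T, 1 / Lam i ≤ ∑ i ∈ Finset.range k, 1 / Lam i := by
    have := aux_sum_le _ hw (T.map Fin.valEmbedding)
    rw [Finset.sum_map, Finset.card_map] at this
    refine le_trans this (Finset.sum_le_sum_of_subset_of_nonneg (Finset.range_mono hc) ?_)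
    intro i _ _
    have := hLpos i
    positivity
  rw [← Finset.mul_sum] at h1
  refine h1.trans (le_trans ?_ hak)
  gcongr

theorem aux_geom (J : ℕ) : ∑ j ∈ Finset.range J, (1 / 2 : ℝ) ^ (j + 1) = 1 - (1/2) ^ J := by
  induction J with
  | zero => simp
  | succ n ih => rw [Finset.sum_range_succ, ih]; ring

theorem aux_jensen (p : ℝ) (hp : 1 ≤ p) (x : ℕ → ℝ) (J : ℕ) :
    |∑ j ∈ Finset.range J, (1 / 2 : ℝ) ^ (j + 1) * x j| ^ p ≤
      ∑ j ∈ Finset.range J, (1 / 2 : ℝ) ^ (j + 1) * |x j| ^ p := by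
  have h1 : |∑ j ∈ Finset.range J, (1 / 2 : ℝ) ^ (j + 1) * x j| ≤
      ∑ j ∈ Finset.range J, (1 / 2 : ℝ) ^ (j + 1) * |x j| := by
    refine (Finset.abs_sum_le_sum_abs _ _).trans (le_of_eq ?_)
    apply Finset.sum_congr rfl
    intro j _
    rw [abs_mul, abs_of_nonneg (by positivity)]
  have h2 := Real.inner_le_weight_mul_Lp_of_nonneg (Finset.range J) hp
    (fun j => (1 / 2 : ℝ) ^ (j + 1)) (fun j => |x j|) (fun _ => by positivity)
    (fun _ => abs_nonneg _)
  rw [aux_geom] at h2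
  have h3 : (1 - (1 / 2 : ℝ) ^ J) ^ (1 - p⁻¹) ≤ 1 := by
    apply Real.rpow_le_one
    · have : (1/2 : ℝ) ^ J ≤ 1 := pow_le_one₀ (by norm_num) (by norm_num)
      linarith
    · have : (0:ℝ) < (1/2) ^ J := by positivity
      linarith
    · have := inv_le_one_of_one_le₀ hp
      linarith
  have h4 : (0:ℝ) ≤ ∑ j ∈ Finset.range J, (1 / 2 : ℝ) ^ (j + 1) * |x j| ^ p :=
    Finset.sum_nonneg fun _ _ => by positivity
  have h5 : |∑ j ∈ Finset.range J, (1 / 2 : ℝ) ^ (j + 1) * x j| ≤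
      (∑ j ∈ Finset.range J, (1 / 2 : ℝ) ^ (j + 1) * |x j| ^ p) ^ p⁻¹ :=
    h1.trans (h2.trans (mul_le_of_le_one_left (by positivity) h3))
  calc _ ≤ ((∑ j ∈ Finset.range J, (1 / 2 : ℝ) ^ (j + 1) * |x j| ^ p) ^ p⁻¹) ^ p := by
        gcongr
    _ = _ := Real.rpow_inv_rpow h4 (by linarith)

theorem aux_var (Lam : ℕ → ℝ) (p : ℝ) (hLpos : ∀ i, 0 < Lam i)
    (hp : 1 ≤ p) (f : ℕ → ℝ → ℝ)
    (hs : ∀ x, Summable (fun j => (1 / 2 : ℝ) ^ (j + 1) * f j x))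
    (hf : ∀ j n (I : Fin n → ℝ × ℝ), Nonoverlapping n I →
      ∑ i, |f j (I i).2 - f j (I i).1| ^ p / Lam i ≤ 1) :
    pLamVar Lam p (fun x => ∑' j, (1 / 2 : ℝ) ^ (j + 1) * f j x) < ⊤ := by
  refine lt_of_le_of_lt ?_ ENNReal.one_lt_top
  refine iSup_le fun n => iSup_le fun I => iSup_le fun hI => ?_
  rw [← ENNReal.ofReal_one]
  apply ENNReal.ofReal_le_ofReal
  refine Real.rpow_le_one (Finset.sum_nonneg fun i _ => ?_) ?_ (by positivity)
  · have := hLpos i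
    positivity
  have hlim : Tendsto (fun J => ∑ i, |∑ j ∈ Finset.range J, (1 / 2 : ℝ) ^ (j + 1) * f j (I i).2
      - ∑ j ∈ Finset.range J, (1 / 2 : ℝ) ^ (j + 1) * f j (I i).1| ^ p / Lam i) atTop
      (nhds (∑ i, |∑' j, (1 / 2 : ℝ) ^ (j + 1) * f j (I i).2
      - ∑' j, (1 / 2 : ℝ) ^ (j + 1) * f j (I i).1| ^ p / Lam i)) := by
    apply tendsto_finsetSum
    intro i _
    refine Tendsto.div_const (Tendsto.rpow_const ?_ (Or.inr (by linarith))) _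
    exact (((hs _).hasSum.tendsto_sum_nat).sub ((hs _).hasSum.tendsto_sum_nat)).abs
  refine le_of_tendsto' hlim fun J => ?_
  calc _ ≤ ∑ i, ∑ j ∈ Finset.range J, (1 / 2 : ℝ) ^ (j + 1) *
        (|f j (I i).2 - f j (I i).1| ^ p / Lam i) := by
        apply Finset.sum_le_sum
        intro i _
        have := hLpos i
        have h := aux_jensen p hp (fun j => f j (I i).2 - f j (I i).1) J
        simp only [mul_sub, Finset.sum_sub_distrib] at h
        simp only [← mul_div_assoc, ← Finset.sum_div]
        gcongr
    _ = ∑ j ∈ Finset.range J, (1 / 2 : ℝ) ^ (j + 1) *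
        ∑ i, (|f j (I i).2 - f j (I i).1| ^ p / Lam i) := by
        rw [Finset.sum_comm]; simp only [Finset.mul_sum]
    _ ≤ ∑ j ∈ Finset.range J, (1 / 2 : ℝ) ^ (j + 1) * 1 := by
        gcongr with j _
        exact hf j n I hI
    _ ≤ 1 := by
        simp only [mul_one]
        rw [aux_geom]
        have : (0:ℝ) < (1/2) ^ J := by positivity
        linarith

theorem aux_tail (e : ℕ → ℝ) (j : ℕ) (A : ℝ) (he : ∀ l < j, e l = 0)
    (hj : |e j| = (1 / 2) ^ (j + 1) * A)
    (ht : ∀ l > j, |e l| ≤ (1 / 2) ^ (l + 1) * (A / 2)) :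
    (1 / 2) ^ (j + 2) * A ≤ |∑' l, e l| := by
  have hg : HasSum (fun l : ℕ => (1 / 2 : ℝ) ^ (l + 1)) 1 := by
    have := (hasSum_geometric_two).mul_left (1/2 : ℝ)
    simpa [pow_succ, mul_comm] using this
  have hb : HasSum (fun l : ℕ => (1 / 2 : ℝ) ^ (l + 1) * ((1/2) ^ (j + 1) * (A / 2)))
      ((1/2) ^ (j + 1) * (A / 2)) := by simpa using hg.mul_right ((1/2) ^ (j + 1) * (A / 2))
  have hbd : ∀ l, |e (l + (j + 1))| ≤ (1 / 2 : ℝ) ^ (l + 1) * ((1/2) ^ (j + 1) * (A / 2)) := by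
    intro l
    refine (ht _ (by omega)).trans (le_of_eq ?_)
    ring
  have hs : Summable e := by
    rw [← summable_nat_add_iff (j + 1)]
    exact Summable.of_norm_bounded hb.summable hbd
  have h1 := hs.sum_add_tsum_nat_add (j + 1)
  have h2 : |∑' l, e (l + (j + 1))| ≤ (1/2) ^ (j + 1) * (A / 2) :=
    tsum_of_norm_bounded (f := fun l => e (l + (j + 1))) hb hbd
  rw [Finset.sum_range_succ, Finset.sum_eq_zero (fun l hl => he l (Finset.mem_range.1 hl)),
    zero_add] at h1
  rw [← h1]
  have h3 := abs_sub_abs_le_abs_sub (e j) (-∑' l, e (l + (j + 1)))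
  rw [abs_neg, sub_neg_eq_add, hj] at h3
  have : (1 / 2 : ℝ) ^ (j + 2) * A = (1 / 2) ^ (j + 1) * A - (1/2) ^ (j + 1) * (A / 2) := by ring
  linarith

theorem aux_key (Lam q δ : ℕ → ℝ) (p : ℝ)
    (hLpos : ∀ i, 0 < Lam i)
    (hLdiv : Tendsto (fun n => ∑ i ∈ Finset.range n, 1 / Lam i) atTop atTop)
    (hp : 1 ≤ p)
    (hqpos : ∀ n, 0 < q n) (hq : StrictMono q)
    (h : Filter.limsup (fun n =>
        ⨆ (k : ℕ) (_ : 1 ≤ k) (_ : (k : ℝ) ≤ δ n),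
          ENNReal.ofReal ((k : ℝ) ^ (1 / q n) /
            (∑ i ∈ Finset.range k, 1 / Lam i) ^ (1 / p))) atTop = ⊤) (M : ℝ) (m : ℕ) :
    ∃ x : ℕ × ℕ, 1 ≤ x.2 ∧ 3 * m ≤ x.2 ∧
      (1 ≤ m → 1 / (∑ i ∈ Finset.range x.2, 1 / Lam i) ^ (1 / p) ≤
        1 / (∑ i ∈ Finset.range m, 1 / Lam i) ^ (1 / p) / 2) ∧
      (x.2 : ℝ) ≤ δ x.1 ∧
      M ≤ (x.2 : ℝ) ^ (1 / q x.1) * (1 / (∑ i ∈ Finset.range x.2, 1 / Lam i) ^ (1 / p)) := by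
  have hp0 : 0 < 1 / p := by positivity
  have hS : ∀ k, 0 ≤ ∑ i ∈ Finset.range k, 1 / Lam i := fun k =>
    Finset.sum_nonneg fun i _ => by have := hLpos i; positivity
  have hS1 : ∀ k, 1 ≤ k → 0 < ∑ i ∈ Finset.range k, 1 / Lam i := fun k hk =>
    Finset.sum_pos (fun i _ => by have := hLpos i; positivity) ⟨0, Finset.mem_range.2 hk⟩
  have hdiv := (tendsto_rpow_atTop hp0).comp hLdiv
  obtain ⟨K, hK⟩ := (hdiv.eventually_ge_atTop
    (2 * (∑ i ∈ Finset.range m, 1 / Lam i) ^ (1 / p))).exists_forall_of_atTop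
  set B : ℕ → ℝ := fun k => (k : ℝ) ^ (1 / q 0) / (∑ i ∈ Finset.range k, 1 / Lam i) ^ (1 / p)
    with hB
  have hB0 : ∀ k, 0 ≤ B k := fun k => by have := hS k; simp only [hB]; positivity
  set R := |M| + ∑ k ∈ Finset.range (K + 3 * m), B k with hR
  have hBs : 0 ≤ ∑ k ∈ Finset.range (K + 3 * m), B k := Finset.sum_nonneg fun k _ => hB0 k
  have hex : ∃ n, ENNReal.ofReal R < ⨆ (k : ℕ) (_ : 1 ≤ k) (_ : (k : ℝ) ≤ δ n),
          ENNReal.ofReal ((k : ℝ) ^ (1 / q n) /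
            (∑ i ∈ Finset.range k, 1 / Lam i) ^ (1 / p)) := by
    by_contra hcon
    push Not at hcon
    have : limsup (fun n =>
        ⨆ (k : ℕ) (_ : 1 ≤ k) (_ : (k : ℝ) ≤ δ n),
          ENNReal.ofReal ((k : ℝ) ^ (1 / q n) /
            (∑ i ∈ Finset.range k, 1 / Lam i) ^ (1 / p))) atTop ≤ ENNReal.ofReal R :=
      limsup_le_of_le (h := Eventually.of_forall hcon)
    rw [h] at this
    exact absurd this (by simp)
  obtain ⟨n, hn⟩ := hex
  simp only [lt_iSup_iff] at hn
  obtain ⟨k, hk1, hkδ, hlt⟩ := hn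
  have hlt' := (ENNReal.ofReal_lt_ofReal_iff_of_nonneg (by positivity)).1 hlt
  have hkK : K + 3 * m ≤ k := by
    by_contra hcon
    push Not at hcon
    have h1 : B k ≤ ∑ k ∈ Finset.range (K + 3 * m), B k :=
      Finset.single_le_sum (fun k _ => hB0 k) (Finset.mem_range.2 hcon)
    have h2 : (k : ℝ) ^ (1 / q n) / (∑ i ∈ Finset.range k, 1 / Lam i) ^ (1 / p) ≤ B k := by
      have := hS k
      have hk1' : (1 : ℝ) ≤ k := by exact_mod_cast hk1
      have := one_div_le_one_div_of_le (hqpos 0) (hq.monotone (Nat.zero_le n))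
      simp only [hB]
      gcongr
    linarith [abs_nonneg M]
  refine ⟨(n, k), hk1, by simp only; omega, fun hm => ?_, hkδ, ?_⟩
  · have h1 := hK k (by omega)
    simp only [Function.comp] at h1
    have h2 : 0 < (∑ i ∈ Finset.range m, 1 / Lam i) ^ (1 / p) := Real.rpow_pos_of_pos (hS1 m hm) _
    rw [div_div, mul_comm]
    exact one_div_le_one_div_of_le (by positivity) h1
  · simp only
    rw [mul_one_div]
    linarith [le_abs_self M]

/-- **Necessity.** If `limsup_{n→∞} max_{1 ≤ k ≤ δ(n)} k^{1/q(n)} / (∑_{i=1}^k 1/λ_i)^{1/p}`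
is infinite, then there is a function `g` of bounded `p`-`Λ`-variation which does not belong
to `BV(q;δ)`; the inclusion `ΛBV^(p) ⊆ BV(q;δ)` fails. -/
theorem necessity
    (Lam q δ : ℕ → ℝ) (p : ℝ)
    (hLpos : ∀ i, 0 < Lam i) (hLmono : Monotone Lam)
    (hLdiv : Tendsto (fun n => ∑ i ∈ Finset.range n, 1 / Lam i) atTop atTop)
    (hp : 1 ≤ p)
    (hqpos : ∀ n, 0 < q n) (hq : StrictMono q)
    (hδpos : ∀ n, 0 < δ n) (hδ : StrictMono δ)
    (hδunbdd : Tendsto δ atTop atTop)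
    (h : Filter.limsup (fun n =>
        ⨆ (k : ℕ) (_ : 1 ≤ k) (_ : (k : ℝ) ≤ δ n),
          ENNReal.ofReal ((k : ℝ) ^ (1 / q n) /
            (∑ i ∈ Finset.range k, 1 / Lam i) ^ (1 / p))) atTop = ⊤) :
    ∃ g : ℝ → ℝ, pLamVar Lam p g < ⊤ ∧ ¬ wienerVar q δ g < ⊤ := by
  have hp0 : 0 < p := by linarith
  have hS1 : ∀ k, 1 ≤ k → 0 < ∑ i ∈ Finset.range k, 1 / Lam i := fun k hk =>
    Finset.sum_pos (fun i _ => by have := hLpos i; positivity) ⟨0, Finset.mem_range.2 hk⟩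
  choose F hF1 hF3 hFa hFδ hFM using aux_key Lam q δ p hLpos hLdiv hp hqpos hq h
  let P : ℕ → ℕ × ℕ := fun j => Nat.rec (F 1 1) (fun j x => F (4 ^ (j + 1)) x.2) j
  have hPs : ∀ j, P (j + 1) = F (4 ^ (j + 1)) (P j).2 := fun j => rfl
  have hP0 : P 0 = F 1 1 := rfl
  obtain ⟨N, hN⟩ : ∃ N : ℕ → ℕ, ∀ j, N j = (P j).1 := ⟨_, fun _ => rfl⟩
  obtain ⟨k, hk⟩ : ∃ k : ℕ → ℕ, ∀ j, k j = (P j).2 := ⟨_, fun _ => rfl⟩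
  obtain ⟨a, ha⟩ : ∃ a : ℕ → ℝ, ∀ j, a j =
    1 / (∑ i ∈ Finset.range (k j), 1 / Lam i) ^ (1 / p) := ⟨_, fun _ => rfl⟩
  have k1 : ∀ j, 1 ≤ k j := by
    intro j
    rw [hk]
    cases j with
    | zero => exact hF1 _ _
    | succ j => exact hF1 _ _
  have k3 : ∀ j, 3 * k j ≤ k (j + 1) := by
    intro j
    rw [hk, hk, hPs]
    exact hF3 _ _
  have kδ : ∀ j, (k j : ℝ) ≤ δ (N j) := by
    intro j
    rw [hk, hN]
    cases j with
    | zero => exact hFδ _ _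
    | succ j => exact hFδ _ _
  have a2 : ∀ j, a (j + 1) ≤ a j / 2 := by
    intro j
    have := hFa (4 ^ (j + 1)) (P j).2 (by rw [← hk]; exact k1 j)
    rw [← hPs, ← hk j, ← hk (j + 1), ← ha, ← ha] at this
    exact this
  have aM : ∀ j, (4 : ℝ) ^ j ≤ (k j : ℝ) ^ (1 / q (N j)) * a j := by
    intro j
    rw [ha, hk, hN]
    cases j with
    | zero => rw [hP0, pow_zero]; exact hFM 1 1
    | succ j => exact hFM _ _
  clear_value P
  have apos : ∀ j, 0 < a j := fun j => by
    rw [ha]; have := hS1 _ (k1 j); positivity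
  have aanti : Antitone a := antitone_nat_of_succ_le fun j => by linarith [a2 j, apos j]
  have ahalf : ∀ j l, j < l → a l ≤ a j / 2 := fun j l hl => (aanti hl).trans (a2 j)
  have aS : ∀ j, a j ^ p * ∑ i ∈ Finset.range (k j), 1 / Lam i ≤ 1 := by
    intro j
    have h1 := hS1 _ (k1 j)
    rw [ha, Real.div_rpow zero_le_one (by positivity), ← Real.rpow_mul h1.le,
      one_div_mul_cancel hp0.ne', Real.rpow_one, Real.one_rpow, one_div_mul_cancel h1.ne']
  have ksum : ∀ j, 2 * ∑ l ∈ Finset.range j, k l ≤ k j := by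
    intro j
    induction j with
    | zero => simp
    | succ j ih => rw [Finset.sum_range_succ]; have := k3 j; omega
  let f : ℕ → ℝ → ℝ := fun j => auxF (δ (N j)) (k j) (a j)
  have hg : Summable (fun l : ℕ => (1 / 2 : ℝ) ^ (l + 1)) := by
    have := (summable_geometric_two).mul_left (1/2 : ℝ)
    simpa [pow_succ, mul_comm] using this
  have hs : ∀ x, Summable (fun j => (1 / 2 : ℝ) ^ (j + 1) * f j x) := by
    intro x
    refine Summable.of_norm_bounded (hg.mul_right (a 0)) fun j => ?_
    rw [Real.norm_eq_abs, abs_mul, abs_of_nonneg (by positivity)]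
    have := (auxF_bd (δ (N j)) (k j) (a j) (apos j).le x).trans (aanti (Nat.zero_le j))
    gcongr
  refine ⟨fun x => ∑' j, (1 / 2 : ℝ) ^ (j + 1) * f j x, ?_, ?_⟩
  · exact aux_var Lam p hLpos hp f hs fun j n I hI =>
      auxF_var Lam p hLpos hLmono hp _ (hδpos _) _ _ (apos j).le (aS j) n I hI
  set g : ℝ → ℝ := fun x => ∑' j, (1 / 2 : ℝ) ^ (j + 1) * f j x with hgdef
  -- lower bound on the Wiener variation
  have hlow : ∀ j : ℕ, ENNReal.ofReal ((1 / 2 : ℝ) ^ (1 / q 0) / 4 * 2 ^ j) ≤ wienerVar q δ g := by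
    intro j
    set D := δ (N j) with hD
    have hDpos : 0 < D := hδpos _
    let I : Fin (k j) → ℝ × ℝ := fun i => (((i : ℕ) : ℝ) / D, (((i : ℕ) + 1 : ℕ) : ℝ) / D)
    have hI : Nonoverlapping (k j) I := by
      refine ⟨fun i => ⟨by simp only [I]; positivity, ?_, ?_⟩, fun i i' hne => ?_⟩
      · simp only [I]; gcongr; omega
      · simp only [I]
        rw [div_le_one hDpos]
        refine le_trans ?_ (kδ j)
        exact_mod_cast i.2
      · simp only [I]
        have : (i : ℕ) ≠ i' := fun h' => hne (Fin.ext h')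
        rcases Nat.lt_or_gt_of_ne this with h' | h'
        · left; gcongr; omega
        · right; gcongr; omega
    have hlen : ∀ i, 1 / δ (N j) ≤ (I i).2 - (I i).1 := by
      intro i
      simp only [I]
      rw [← hD, ← sub_div]
      push_cast
      rw [add_sub_cancel_left]
    let bad : ℕ → Finset (Fin (k j)) := fun l => Finset.univ.filter
      (fun i => auxT (δ (N l)) (k l) (I i).1 ≠ auxT (δ (N l)) (k l) (I i).2)
    let Bad := (Finset.range j).biUnion bad
    have hBad : 2 * Bad.card ≤ k j := by
      refine le_trans ?_ (ksum j)
      gcongr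
      refine Finset.card_biUnion_le.trans (Finset.sum_le_sum fun l _ => ?_)
      exact aux_count _ I hI _ (auxT_mono _ (hδpos _) _) _ (auxT_le _ _)
    have hgood : (k j : ℝ) / 2 ≤ (Badᶜ.card : ℝ) := by
      have h1 := Finset.card_add_card_compl Bad
      rw [Fintype.card_fin] at h1
      have h2 : k j ≤ 2 * Badᶜ.card := by omega
      have h3 : (k j : ℝ) ≤ 2 * Badᶜ.card := by exact_mod_cast h2
      linarith
    have hdiff : ∀ i ∈ Badᶜ, (1 / 2) ^ (j + 2) * a j ≤ |g (I i).2 - g (I i).1| := by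
      intro i hi
      have hi' : ∀ l < j, auxT (δ (N l)) (k l) (I i).1 = auxT (δ (N l)) (k l) (I i).2 := by
        intro l hl
        by_contra hcon
        refine (Finset.mem_compl.1 hi) (Finset.mem_biUnion.2 ⟨l, Finset.mem_range.2 hl, ?_⟩)
        exact Finset.mem_filter.2 ⟨Finset.mem_univ _, hcon⟩
      simp only [hgdef]
      rw [← (hs _).tsum_sub (hs _)]
      apply aux_tail _ j (a j)
      · intro l hl
        simp only [f, auxF, hi' l hl, sub_self]
      · rw [← mul_sub, abs_mul, abs_of_nonneg (by positivity)]
        congr 1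
        exact auxF_step D hDpos (k j) (a j) (apos j).le i i.2
      · intro l hl
        rw [← mul_sub, abs_mul, abs_of_nonneg (by positivity)]
        have := (auxF_diff (δ (N l)) (k l) (a l) (apos l).le (I i).1 (I i).2).trans (ahalf j l hl)
        gcongr
    have hqj := hqpos (N j)
    have haj := apos j
    have hsum : (k j : ℝ) / 2 * ((1 / 2) ^ (j + 2) * a j) ^ q (N j) ≤
        ∑ i, |g (I i).2 - g (I i).1| ^ q (N j) := by
      calc _ ≤ (Badᶜ.card : ℝ) * ((1 / 2) ^ (j + 2) * a j) ^ q (N j) := by gcongr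
        _ = ∑ i ∈ Badᶜ, ((1 / 2) ^ (j + 2) * a j) ^ q (N j) := by
          rw [Finset.sum_const, nsmul_eq_mul]
        _ ≤ ∑ i ∈ Badᶜ, |g (I i).2 - g (I i).1| ^ q (N j) := by
          apply Finset.sum_le_sum
          intro i hi
          have := hdiff i hi
          gcongr
        _ ≤ _ := Finset.sum_le_sum_of_subset_of_nonneg (Finset.subset_univ _)
          fun i _ _ => by positivity
    have hfin : (1 / 2 : ℝ) ^ (1 / q 0) / 4 * 2 ^ j ≤
        (∑ i, |g (I i).2 - g (I i).1| ^ q (N j)) ^ (1 / q (N j)) := by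
      calc (1 / 2 : ℝ) ^ (1 / q 0) / 4 * 2 ^ j
          = (1 / 2 : ℝ) ^ (1 / q 0) * (1 / 2) ^ (j + 2) * 4 ^ j := by
            have : (4 : ℝ) ^ j = 2 ^ j * 2 ^ j := by rw [← mul_pow]; norm_num
            rw [this, pow_add, one_div_pow 2 j]
            field_simp
            norm_num
        _ ≤ (1 / 2 : ℝ) ^ (1 / q (N j)) * (1 / 2) ^ (j + 2) *
              ((k j : ℝ) ^ (1 / q (N j)) * a j) := by
            have h1 : (1 / 2 : ℝ) ^ (1 / q 0) ≤ (1 / 2 : ℝ) ^ (1 / q (N j)) :=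
              Real.rpow_le_rpow_of_exponent_ge (by norm_num) (by norm_num)
                (one_div_le_one_div_of_le (hqpos 0) (hq.monotone (Nat.zero_le _)))
            have h2 := aM j
            gcongr
        _ = ((k j : ℝ) / 2 * ((1 / 2) ^ (j + 2) * a j) ^ q (N j)) ^ (1 / q (N j)) := by
            rw [Real.mul_rpow (by positivity) (by positivity), ← Real.rpow_mul (by positivity),
              mul_one_div_cancel hqj.ne', Real.rpow_one, div_eq_mul_one_div (k j : ℝ) 2,
              Real.mul_rpow (by positivity) (by positivity)]
            ring
        _ ≤ _ := by gcongr
    refine (ENNReal.ofReal_le_ofReal hfin).trans ?_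
    unfold wienerVar
    exact le_iSup_of_le (N j) (le_iSup_of_le (k j) (le_iSup_of_le I (le_iSup_of_le hI
      (le_iSup_of_le hlen le_rfl))))
  intro hlt
  have hC : 0 < (1 / 2 : ℝ) ^ (1 / q 0) / 4 := by positivity
  obtain ⟨j, hj⟩ := pow_unbounded_of_one_lt
    ((wienerVar q δ g).toReal / ((1 / 2 : ℝ) ^ (1 / q 0) / 4)) (one_lt_two)
  rw [div_lt_iff₀' hC] at hj
  have h1 := ENNReal.toReal_mono hlt.ne (hlow j)
  rw [ENNReal.toReal_ofReal (by positivity)] at h1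
  linarith
end

section
/- Let s be a positive integer, let q ≥ 1 be a real number, and let x_1 ≥ x_2 ≥ … ≥ x_s ≥ 0 and y_1 ≥ y_2 ≥ … ≥ y_s ≥ 0 be real numbers (with y_1 > 0 so the right-hand side is defined). Then ∑_{j=1}^{s} x_j^q ≤ (∑_{j=1}^{s} x_j y_j)^q · max_{1 ≤ k ≤ s} k / (∑_{j=1}^{k} y_j)^q. -/
theorem aux_lp (q : ℝ) (hq : 1 ≤ q) (y : ℕ → ℝ) (C : ℝ) (n : ℕ) :
    ∀ x : ℕ → ℝ, (∀ k, 1 ≤ k → k ≤ n → (k : ℝ) ^ (1 / q) ≤ C * ∑ j ∈ Finset.range k, y j) →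
    (∀ i j, i ≤ j → j < n → x j ≤ x i) → (∀ i, i < n → 0 ≤ x i) →
    (∑ j ∈ Finset.range n, x j ^ q) ^ (1 / q) ≤ C * ∑ j ∈ Finset.range n, x j * y j := by
  have hq0 : 0 < q := by linarith
  induction n with
  | zero =>
    intro x _ _ _
    have : (1 / q) ≠ 0 := by positivity
    simp only [Finset.range_zero, Finset.sum_empty, mul_zero]
    rw [Real.zero_rpow this]
  | succ n ih =>
    intro x hC hx hx0
    have hc : 0 ≤ x n := hx0 n (by omega)
    have h1 := ih (fun j => x j - x n) (fun k hk hk' => hC k hk (by omega))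
      (fun i j hij hj => by have := hx i j hij (by omega); linarith)
      (fun i hi => by have := hx i n (by omega) (by omega); linarith)
    have h2 := Real.Lp_add_le_of_nonneg (s := Finset.range (n + 1)) (f := fun j => x j - x n)
      (g := fun _ => x n) hq
      (fun i hi => by
        have := hx i n (by have := Finset.mem_range.1 hi; omega) (by omega)
        linarith)
      (fun i hi => hc)
    have h3 : ∑ j ∈ Finset.range (n + 1), (x j - x n) ^ q
        = ∑ j ∈ Finset.range n, (x j - x n) ^ q := by
      rw [Finset.sum_range_succ, sub_self, Real.zero_rpow hq0.ne', add_zero]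
    have h4 : (∑ j ∈ Finset.range (n + 1), (x n) ^ q) ^ (1 / q)
        = ((n + 1 : ℕ) : ℝ) ^ (1 / q) * x n := by
      rw [Finset.sum_const, Finset.card_range, nsmul_eq_mul,
        Real.mul_rpow (by positivity) (by positivity), ← Real.rpow_mul hc,
        mul_one_div_cancel hq0.ne', Real.rpow_one]
    simp only [sub_add_cancel] at h2
    rw [h3, h4] at h2
    have h5 := mul_le_mul_of_nonneg_right (hC (n + 1) (by omega) le_rfl) hc
    have h6 : C * ∑ j ∈ Finset.range (n + 1), x j * y j
        = C * ∑ j ∈ Finset.range n, (x j - x n) * y j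
          + C * (∑ j ∈ Finset.range (n + 1), y j) * x n := by
      simp only [sub_mul, Finset.sum_sub_distrib, ← Finset.mul_sum, Finset.sum_range_succ]
      ring
    rw [h6]
    linarith

/-- **Numerical inequality, case `q ≥ 1`.** If `x_1 ≥ … ≥ x_s ≥ 0` and
`y_1 ≥ … ≥ y_s ≥ 0` (with `y_1 > 0`), then
`∑_{j=1}^s x_j^q ≤ (∑_{j=1}^s x_j y_j)^q · max_{1 ≤ k ≤ s} k / (∑_{j=1}^k y_j)^q`.
Here `x j`, `y j` (for `0 ≤ j < s`) play the roles of `x_{j+1}`, `y_{j+1}`. -/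
theorem numerical_inequality_ge_one
    (s : ℕ) (hs : 1 ≤ s) (q : ℝ) (hq : 1 ≤ q)
    (x y : ℕ → ℝ)
    (hxanti : ∀ i j, i ≤ j → j < s → x j ≤ x i)
    (hxnn : ∀ i, i < s → 0 ≤ x i)
    (hyanti : ∀ i j, i ≤ j → j < s → y j ≤ y i)
    (hynn : ∀ i, i < s → 0 ≤ y i)
    (hy1 : 0 < y 0) :
    ∑ j ∈ Finset.range s, x j ^ q ≤
      (∑ j ∈ Finset.range s, x j * y j) ^ q *
        (Finset.Icc 1 s).sup' (Finset.nonempty_Icc.mpr hs)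
          (fun k => (k : ℝ) / (∑ j ∈ Finset.range k, y j) ^ q) := by
  have hq0 : 0 < q := by linarith
  set M := (Finset.Icc 1 s).sup' (Finset.nonempty_Icc.mpr hs)
          (fun k => (k : ℝ) / (∑ j ∈ Finset.range k, y j) ^ q) with hM
  have hY : ∀ k, 1 ≤ k → k ≤ s → 0 < ∑ j ∈ Finset.range k, y j := by
    intro k hk hks
    refine Finset.sum_pos' (fun i hi => hynn i ?_) ⟨0, ?_, hy1⟩
    · have := Finset.mem_range.1 hi
      omega
    · exact Finset.mem_range.2 (by omega)
  have hle : ∀ k, 1 ≤ k → k ≤ s → (k : ℝ) / (∑ j ∈ Finset.range k, y j) ^ q ≤ M := by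
    intro k hk hks
    exact Finset.le_sup' (fun k : ℕ => (k : ℝ) / (∑ j ∈ Finset.range k, y j) ^ q)
      (Finset.mem_Icc.2 ⟨hk, hks⟩)
  have hM0 : 0 ≤ M := by
    refine le_trans ?_ (hle 1 le_rfl hs)
    have := hY 1 le_rfl hs
    positivity
  have hxy : 0 ≤ ∑ j ∈ Finset.range s, x j * y j :=
    Finset.sum_nonneg fun i hi =>
      mul_nonneg (hxnn i (Finset.mem_range.1 hi)) (hynn i (Finset.mem_range.1 hi))
  have hx : 0 ≤ ∑ j ∈ Finset.range s, x j ^ q :=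
    Finset.sum_nonneg fun i hi => Real.rpow_nonneg (hxnn i (Finset.mem_range.1 hi)) _
  have key := aux_lp q hq y (M ^ (1 / q)) s x (by
    intro k hk hks
    have hp := hY k hk hks
    have h := (div_le_iff₀ (Real.rpow_pos_of_pos hp q)).1 (hle k hk hks)
    have h' := Real.rpow_le_rpow (by positivity) h (by positivity : 0 ≤ 1 / q)
    rwa [Real.mul_rpow hM0 (by positivity), ← Real.rpow_mul hp.le,
      mul_one_div_cancel hq0.ne', Real.rpow_one] at h') hxanti hxnn
  have h' := Real.rpow_le_rpow (by positivity) key hq0.le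
  rwa [Real.mul_rpow (by positivity) hxy, ← Real.rpow_mul hx, ← Real.rpow_mul hM0,
    one_div_mul_cancel hq0.ne', Real.rpow_one, Real.rpow_one, mul_comm] at h'
end

section
/- Let s be a positive integer, let q be a real number with 0 ≤ q < 1, and let x_1 ≥ x_2 ≥ … ≥ x_s ≥ 0 and y_1 ≥ y_2 ≥ … ≥ y_s ≥ 0 be real numbers (with y_1 > 0 so the right-hand side is defined). Then ∑_{j=1}^{s} x_j^q ≤ (∑_{j=1}^{s} x_j y_j)^q · max_{1 ≤ k ≤ s} k / (∑_{j=1}^{k} y_j)^q. -/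
/-- **Numerical inequality, case `0 ≤ q < 1`.** If `x_1 ≥ … ≥ x_s ≥ 0` and
`y_1 ≥ … ≥ y_s ≥ 0` (with `y_1 > 0`), then
`∑_{j=1}^s x_j^q ≤ (∑_{j=1}^s x_j y_j)^q · max_{1 ≤ k ≤ s} k / (∑_{j=1}^k y_j)^q`.
Here `x j`, `y j` (for `0 ≤ j < s`) play the roles of `x_{j+1}`, `y_{j+1}`. -/
theorem numerical_inequality_lt_one
    (s : ℕ) (hs : 1 ≤ s) (q : ℝ) (hq0 : 0 ≤ q) (hq1 : q < 1)
    (x y : ℕ → ℝ)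
    (hxanti : ∀ i j, i ≤ j → j < s → x j ≤ x i)
    (hxnn : ∀ i, i < s → 0 ≤ x i)
    (hyanti : ∀ i j, i ≤ j → j < s → y j ≤ y i)
    (hynn : ∀ i, i < s → 0 ≤ y i)
    (hy1 : 0 < y 0) :
    ∑ j ∈ Finset.range s, x j ^ q ≤
      (∑ j ∈ Finset.range s, x j * y j) ^ q *
        (Finset.Icc 1 s).sup' (Finset.nonempty_Icc.mpr hs)
          (fun k => (k : ℝ) / (∑ j ∈ Finset.range k, y j) ^ q) := by
  have hs0 : (0 : ℝ) < s := by exact_mod_cast hs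
  have hY : 0 < ∑ j ∈ Finset.range s, y j :=
    Finset.sum_pos' (fun i hi => hynn i (Finset.mem_range.mp hi))
      ⟨0, Finset.mem_range.mpr hs, hy1⟩
  have hX : 0 ≤ ∑ j ∈ Finset.range s, x j :=
    Finset.sum_nonneg (fun i hi => hxnn i (Finset.mem_range.mp hi))
  have hP : 0 ≤ ∑ j ∈ Finset.range s, x j * y j :=
    Finset.sum_nonneg (fun i hi => mul_nonneg (hxnn i (Finset.mem_range.mp hi))
      (hynn i (Finset.mem_range.mp hi)))
  -- Chebyshev
  have hmono : MonovaryOn x y (Finset.range s : Set ℕ) := by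
    intro i hi j hj hij
    have hi' : i < s := by simpa using hi
    rcases le_total i j with h | h
    · exact absurd (hyanti i j h (by simpa using hj)) (not_le.mpr hij)
    · exact hxanti j i h hi'
  have hC := hmono.sum_mul_sum_le_card_mul_sum
  rw [Finset.card_range] at hC
  -- Jensen
  have hJ := (Real.concaveOn_rpow hq0 hq1.le).le_map_sum (t := Finset.range s)
    (w := fun _ => (s : ℝ)⁻¹) (p := x) (fun _ _ => by positivity)
    (by simp [hs0.ne']) (fun i hi => hxnn i (Finset.mem_range.mp hi))
  simp only [smul_eq_mul, ← Finset.mul_sum] at hJ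
  have h1 : (s : ℝ)⁻¹ * ∑ j ∈ Finset.range s, x j ≤
      (∑ j ∈ Finset.range s, x j * y j) / ∑ j ∈ Finset.range s, y j := by
    rw [le_div_iff₀ hY, mul_assoc, inv_mul_le_iff₀ hs0]
    exact hC
  have h2 := Real.rpow_le_rpow (by positivity) h1 hq0
  rw [Real.div_rpow hP hY.le] at h2
  have h3 := (inv_mul_le_iff₀ hs0).mp (hJ.trans h2)
  have h4 := Finset.le_sup' (fun k : ℕ => (k : ℝ) / (∑ j ∈ Finset.range k, y j) ^ q)
    (Finset.mem_Icc.mpr ⟨hs, le_refl s⟩)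
  calc _ ≤ _ := h3
    _ = (∑ j ∈ Finset.range s, x j * y j) ^ q *
        ((s : ℝ) / (∑ j ∈ Finset.range s, y j) ^ q) := by ring
    _ ≤ _ := mul_le_mul_of_nonneg_left h4 (Real.rpow_nonneg hP q)
end

section
/- Let Λ = (λ_i) be a nondecreasing sequence of positive real numbers with ∑ 1/λ_i = +∞, let q = (q(n)) be an increasing sequence of positive reals with q(n) → ∞, and set δ(n) = 2^n. Then the inclusion ΛBV ⊆ BV(q;δ) holds if and only if limsup_{n→∞} max_{1 ≤ k ≤ 2^n} k^{1/q(n)} / (∑_{i=1}^{k} 1/λ_i) < +∞. -/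
open scoped ENNReal
open Filter

/-- The `Λ`-variation of `f : [0,1] → ℝ` (Waterman variation), as a value in `ℝ≥0∞`
(`Lam i` plays the role of `λ_{i+1}`). -/
noncomputable def lamVar (Lam : ℕ → ℝ) (f : ℝ → ℝ) : ℝ≥0∞ :=
  ⨆ (n : ℕ) (I : Fin n → ℝ × ℝ) (_ : Nonoverlapping n I),
    ENNReal.ofReal (∑ i, |f (I i).2 - f (I i).1| / Lam i)

lemma gog_norm (Lam : ℕ → ℝ) (p C : ℝ) (hp : 1 ≤ p) (s : ℕ) :
    ∀ (_ : ∀ k : ℕ, 1 ≤ k → k ≤ s → (k : ℝ) ^ (1 / p) ≤ C * ∑ i ∈ Finset.range k, 1 / Lam i)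
      (b : ℕ → ℝ) (_ : Antitone b) (_ : ∀ i, 0 ≤ b i),
      (∑ i ∈ Finset.range s, b i ^ p) ^ (1 / p) ≤ C * ∑ i ∈ Finset.range s, b i / Lam i := by
  have hp0 : 0 < p := by linarith
  induction s with
  | zero =>
    intro _ b _ _
    simp [Real.zero_rpow (inv_ne_zero hp0.ne')]
  | succ s ih =>
    intro hC b hb hb0
    set b' : ℕ → ℝ := fun i => max (b i - b s) 0 with hb'
    have hIH := ih (fun k h1 h2 => hC k h1 (by omega)) b'
      (fun i j hij => max_le_max (by have := hb hij; linarith) le_rfl) (fun i => le_max_right _ _)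
    have hb'le : ∀ i ∈ Finset.range (s+1), b' i = b i - b s := by
      intro i hi
      have : b s ≤ b i := hb (by have := Finset.mem_range.1 hi; omega)
      exact max_eq_left (by linarith)
    have hM := Real.Lp_add_le_of_nonneg (Finset.range (s+1)) (f := b') (g := fun _ => b s) hp
      (fun i _ => le_max_right _ _) (fun i _ => hb0 s)
    have e1 : ∑ i ∈ Finset.range (s+1), (b' i + b s) ^ p = ∑ i ∈ Finset.range (s+1), b i ^ p := by
      refine Finset.sum_congr rfl fun i hi => ?_
      rw [hb'le i hi]; ring_nf
    have e2 : ∑ i ∈ Finset.range (s+1), b' i ^ p = ∑ i ∈ Finset.range s, b' i ^ p := by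
      rw [Finset.sum_range_succ]; simp [hb', Real.zero_rpow hp0.ne']
    have e3 : (∑ i ∈ Finset.range (s+1), b s ^ p) ^ (1/p) = ((s+1 : ℕ) : ℝ) ^ (1/p) * b s := by
      rw [Finset.sum_const, Finset.card_range, nsmul_eq_mul,
        Real.mul_rpow (by positivity) (Real.rpow_nonneg (hb0 s) _), ← Real.rpow_mul (hb0 s),
        mul_one_div_cancel hp0.ne', Real.rpow_one]
    rw [e1, e2, e3] at hM
    have h4 := mul_le_mul_of_nonneg_right (hC (s+1) (by omega) le_rfl) (hb0 s)
    have e5 : ∑ i ∈ Finset.range s, b' i / Lam i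
        = ∑ i ∈ Finset.range s, b i / Lam i - b s * ∑ i ∈ Finset.range s, 1 / Lam i := by
      rw [Finset.mul_sum, ← Finset.sum_sub_distrib]
      refine Finset.sum_congr rfl fun i hi => ?_
      rw [hb'le i (Finset.mem_range.2 (by have := Finset.mem_range.1 hi; omega))]; ring
    rw [e5] at hIH
    rw [Finset.sum_range_succ (fun i => 1 / Lam i)] at h4
    rw [Finset.sum_range_succ (fun i => b i / Lam i)]
    calc _ ≤ _ := hM
      _ ≤ _ := add_le_add hIH h4
      _ = _ := by ring

/-- rearranged variant over `Fin s`. -/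
lemma gog_fin (Lam : ℕ → ℝ) (p C V : ℝ) (hp : 1 ≤ p) (hC0 : 0 ≤ C) (s : ℕ)
    (hC : ∀ k : ℕ, 1 ≤ k → k ≤ s → (k : ℝ) ^ (1 / p) ≤ C * ∑ i ∈ Finset.range k, 1 / Lam i)
    (a : Fin s → ℝ) (ha : ∀ i, 0 ≤ a i)
    (hV : ∀ σ : Equiv.Perm (Fin s), ∑ i, a (σ i) / Lam i ≤ V) :
    (∑ i, a i ^ p) ^ (1 / p) ≤ C * V := by
  set σ := Tuple.sort (fun i => - a i) with hσ
  have hmono := Tuple.monotone_sort (fun i => - a i)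
  set b : ℕ → ℝ := fun i => if h : i < s then a (σ ⟨i, h⟩) else 0 with hb
  have hb0 : ∀ i, 0 ≤ b i := by
    intro i; simp only [hb]; split_ifs; exacts [ha _, le_rfl]
  have hanti : Antitone b := by
    intro i j hij
    by_cases hj : j < s
    · have hi : i < s := by omega
      have := hmono (show (⟨i, hi⟩ : Fin s) ≤ ⟨j, hj⟩ from hij)
      simp only [Function.comp] at this
      simp only [hb, hi, hj, dif_pos]
      linarith
    · have : b j = 0 := by simp [hb, hj]
      rw [this]; exact hb0 i
  have h := gog_norm Lam p C hp s hC b hanti hb0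
  have e1 : ∑ i ∈ Finset.range s, b i ^ p = ∑ i, a i ^ p := by
    rw [← Equiv.sum_comp σ, Finset.sum_range]
    refine Finset.sum_congr rfl fun i _ => ?_
    simp [hb]
  have e2 : ∑ i ∈ Finset.range s, b i / Lam i = ∑ i, a (σ i) / Lam i := by
    rw [Finset.sum_range]
    refine Finset.sum_congr rfl fun i _ => ?_
    simp [hb]
  rw [e1, e2] at h
  exact h.trans (mul_le_mul_of_nonneg_left (hV σ) hC0)

lemma gog_perm {s : ℕ} {I : Fin s → ℝ × ℝ} (hI : Nonoverlapping s I) (σ : Equiv.Perm (Fin s)) :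
    Nonoverlapping s (I ∘ σ) :=
  ⟨fun i => hI.1 (σ i), fun i j hij => hI.2 _ _ (fun h => hij (σ.injective h))⟩

lemma gog_lam {Lam : ℕ → ℝ} {f : ℝ → ℝ} (hf : lamVar Lam f < ⊤) {s : ℕ} {I : Fin s → ℝ × ℝ}
    (hI : Nonoverlapping s I) :
    ∑ i, |f (I i).2 - f (I i).1| / Lam i ≤ (lamVar Lam f).toReal := by
  have h : ENNReal.ofReal (∑ i, |f (I i).2 - f (I i).1| / Lam i) ≤ lamVar Lam f :=
    le_iSup_of_le s (le_iSup_of_le I (le_iSup_of_le hI le_rfl))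
  exact (ENNReal.ofReal_le_iff_le_toReal hf.ne).1 h

/-- total length of nonoverlapping intervals. -/
lemma gog_card {s : ℕ} {I : Fin s → ℝ × ℝ} (hI : Nonoverlapping s I) (n : ℕ)
    (hl : ∀ k, 1 / (2:ℝ)^n ≤ (I k).2 - (I k).1) : s ≤ 2 ^ n := by
  open MeasureTheory in
  have h1 : volume (⋃ k, Set.Ioo (I k).1 (I k).2) = ∑ k, volume (Set.Ioo (I k).1 (I k).2) := by
    rw [measure_iUnion, tsum_fintype]
    · intro i j hij
      rw [Function.onFun, Set.disjoint_left]
      intro x hx hy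
      rcases hI.2 i j hij with h | h
      · exact absurd (hx.2.trans_le h) (not_lt.2 hy.1.le)
      · exact absurd (hy.2.trans_le h) (not_lt.2 hx.1.le)
    · exact fun i => measurableSet_Ioo
  open MeasureTheory in
  have h2 : volume (⋃ k, Set.Ioo (I k).1 (I k).2) ≤ volume (Set.Icc (0:ℝ) 1) := by
    refine measure_mono (Set.iUnion_subset fun k x hx => ?_)
    have := hI.1 k
    exact ⟨this.1.trans hx.1.le, hx.2.le.trans this.2.2⟩
  rw [h1] at h2
  simp only [Real.volume_Ioo, Real.volume_Icc] at h2
  rw [← ENNReal.ofReal_sum_of_nonneg (fun i _ => by have := (hI.1 i).2.1; linarith),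
    ENNReal.ofReal_le_ofReal_iff (by norm_num)] at h2
  have h3 : ∑ k : Fin s, 1 / (2:ℝ)^n ≤ 1 := (Finset.sum_le_sum fun k _ => hl k).trans (by linarith)
  rw [Finset.sum_const, Finset.card_univ, Fintype.card_fin, nsmul_eq_mul, mul_one_div,
    div_le_one (by positivity)] at h3
  exact_mod_cast h3

lemma gog_single {Lam : ℕ → ℝ} (hLpos : ∀ i, 0 < Lam i) {f : ℝ → ℝ} (hf : lamVar Lam f < ⊤)
    {s : ℕ} {I : Fin s → ℝ × ℝ} (hI : Nonoverlapping s I) (k : Fin s) :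
    |f (I k).2 - f (I k).1| ≤ (lamVar Lam f).toReal * Lam 0 := by
  have h := gog_lam hf (s := 1) (I := fun _ => I k)
    ⟨fun _ => hI.1 k, fun _ _ hij => absurd (Subsingleton.elim _ _) hij⟩
  simp only [Finset.univ_unique, Finset.sum_singleton] at h
  rw [div_le_iff₀ (hLpos _)] at h
  simpa using h

lemma gog_backward
    (Lam q : ℕ → ℝ)
    (hLpos : ∀ i, 0 < Lam i)
    (hqpos : ∀ n, 0 < q n)
    (hqtop : Tendsto q atTop atTop)
    (hlim : Filter.limsup (fun n =>
        ⨆ (k : ℕ) (_ : 1 ≤ k) (_ : k ≤ 2 ^ n),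
          ENNReal.ofReal ((k : ℝ) ^ (1 / q n) /
            ∑ i ∈ Finset.range k, 1 / Lam i)) atTop < ⊤)
    (f : ℝ → ℝ) (hf : lamVar Lam f < ⊤) :
    wienerVar q (fun n => (2 : ℝ) ^ n) f < ⊤ := by
  obtain ⟨C, hC1, hC2⟩ := exists_between hlim
  have hev := (eventually_lt_of_limsup_lt hC1).and (hqtop.eventually_ge_atTop 1)
  obtain ⟨N, hN⟩ := eventually_atTop.1 hev
  set V := (lamVar Lam f).toReal with hV
  have hV0 : 0 ≤ V := ENNReal.toReal_nonneg
  set B : ℕ → ℝ := fun n => ((2^n : ℝ) * (V * Lam 0) ^ q n) ^ (1 / q n) with hB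
  have hB0 : ∀ n, 0 ≤ B n := fun n => by
    have := (hLpos 0).le
    positivity
  set M : ℝ := C.toReal * V + ∑ n ∈ Finset.range N, B n with hM
  have hM0 : 0 ≤ ∑ n ∈ Finset.range N, B n := Finset.sum_nonneg fun n _ => hB0 n
  refine lt_of_le_of_lt (b := ENNReal.ofReal M) ?_ ENNReal.ofReal_lt_top
  refine iSup_le fun n => iSup_le fun s => iSup_le fun I => iSup_le fun hI => iSup_le fun hl => ?_
  refine ENNReal.ofReal_le_ofReal ?_
  have hs := gog_card hI n hl
  by_cases hn : N ≤ n
  · obtain ⟨h1, h2⟩ := hN n hn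
    refine (gog_fin Lam (q n) C.toReal V h2 ENNReal.toReal_nonneg s ?_
      (fun k => |f (I k).2 - f (I k).1|) (fun _ => abs_nonneg _) ?_).trans (by linarith)
    · intro k hk1 hk2
      have hS : 0 < ∑ i ∈ Finset.range k, 1 / Lam i :=
        Finset.sum_pos (fun i _ => one_div_pos.2 (hLpos i)) ⟨0, Finset.mem_range.2 hk1⟩
      have h3 : ENNReal.ofReal ((k : ℝ) ^ (1 / q n) / ∑ i ∈ Finset.range k, 1 / Lam i) ≤ C := by
        refine le_trans ?_ h1.le
        refine le_iSup_of_le k ?_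
        refine le_iSup_of_le hk1 ?_
        exact le_iSup_of_le (hk2.trans hs) le_rfl
      rw [ENNReal.ofReal_le_iff_le_toReal hC2.ne, div_le_iff₀ hS] at h3
      exact h3
    · intro σ
      exact gog_lam hf (gog_perm hI σ)
  · have hle : B n ≤ ∑ n ∈ Finset.range N, B n :=
      Finset.single_le_sum (fun n _ => hB0 n) (Finset.mem_range.2 (not_le.1 hn))
    have hCV : 0 ≤ C.toReal * V := mul_nonneg ENNReal.toReal_nonneg hV0
    refine le_trans ?_ (show B n ≤ M by linarith)
    have hq0 := hqpos n
    refine Real.rpow_le_rpow (Finset.sum_nonneg fun i _ => by positivity) ?_ (by positivity)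
    calc ∑ k, |f (I k).2 - f (I k).1| ^ q n ≤ ∑ k : Fin s, (V * Lam 0) ^ q n :=
          Finset.sum_le_sum fun k _ =>
            Real.rpow_le_rpow (abs_nonneg _) (gog_single hLpos hf hI k) hq0.le
      _ = s * (V * Lam 0) ^ q n := by simp
      _ ≤ _ := by
        have := (hLpos 0).le
        gcongr
        exact_mod_cast hs

lemma gog_le_apply {n : ℕ} (g : Fin n → ℕ) (hg : StrictMono g) (i : ℕ) :
    ∀ h : i < n, i ≤ g ⟨i, h⟩ := by
  induction i with
  | zero => intro _; exact Nat.zero_le _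
  | succ i ih =>
    intro h
    have h1 := ih (by omega)
    have h2 : g ⟨i, by omega⟩ < g ⟨i + 1, h⟩ := hg (by simp [Fin.lt_def])
    omega

lemma gog_subsum (Lam : ℕ → ℝ)
    (hLpos : ∀ i, 0 < Lam i) (hLmono : Monotone Lam) (m : ℕ) (A : Finset ℕ) (hA : A.card ≤ m) :
    ∑ i ∈ A, 1 / Lam i ≤ ∑ i ∈ Finset.range m, 1 / Lam i := by
  classical
  have h1 : ∑ i ∈ A, 1 / Lam i ≤ ∑ i ∈ Finset.range A.card, 1 / Lam i := by
    rw [Finset.sum_range, ← Finset.sum_coe_sort A, ← Equiv.sum_comp (A.orderIsoOfFin rfl).toEquiv]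
    refine Finset.sum_le_sum fun i _ => ?_
    refine one_div_le_one_div_of_le (hLpos _) (hLmono ?_)
    exact gog_le_apply (A.orderEmbOfFin rfl) (A.orderEmbOfFin rfl).strictMono i.1 i.2
  exact h1.trans (Finset.sum_le_sum_of_subset_of_nonneg (Finset.range_mono hA)
    fun i _ _ => (one_div_pos.2 (hLpos i)).le)

/-- points where the bump of level `n` is supported -/
noncomputable def gogPt (n i : ℕ) : ℝ := (4 * i + 1) / 2 ^ (n + 1)

lemma gog_parity (a b i j : ℕ) : (4 * (i:ℝ) + 3) / 2 ^ (a + 1) ≠ gogPt b j := by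
  intro h
  unfold gogPt at h
  rw [div_eq_div_iff (by positivity) (by positivity)] at h
  have h' : (4 * i + 3) * 2 ^ (b + 1) = (4 * j + 1) * 2 ^ (a + 1) := by exact_mod_cast h
  rcases lt_trichotomy a b with hab | hab | hab
  · obtain ⟨c, rfl⟩ := Nat.exists_eq_add_of_lt hab
    have e : (2:ℕ) ^ (a + c + 1 + 1) = 2 * 2 ^ c * 2 ^ (a + 1) := by ring
    rw [e, ← mul_assoc] at h'
    have h2 := Nat.eq_of_mul_eq_mul_right (by positivity) h'
    have : (4 * i + 3) * (2 * 2 ^ c) = 2 * ((4 * i + 3) * 2 ^ c) := by ring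
    omega
  · subst hab
    have h2 := Nat.eq_of_mul_eq_mul_right (by positivity) h'
    omega
  · obtain ⟨c, rfl⟩ := Nat.exists_eq_add_of_lt hab
    have e : (2:ℕ) ^ (b + c + 1 + 1) = 2 * 2 ^ c * 2 ^ (b + 1) := by ring
    rw [e, ← mul_assoc] at h'
    have h2 := Nat.eq_of_mul_eq_mul_right (by positivity) h'
    have : (4 * j + 1) * (2 * 2 ^ c) = 2 * ((4 * j + 1) * 2 ^ c) := by ring
    omega

noncomputable def gogSet (n m : ℕ) : Finset ℝ := (Finset.range m).image (gogPt n)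

lemma gogSet_card (n m : ℕ) : (gogSet n m).card ≤ m :=
  Finset.card_image_le.trans (by simp)

/-- the extremal function -/
noncomputable def gogFun (n m : ℕ → ℕ) (h : ℕ → ℝ) (x : ℝ) : ℝ :=
  ∑' j, if x ∈ gogSet (n j) (m j) then h j else 0

lemma gogFun_summable {n m : ℕ → ℕ} {h : ℕ → ℝ} (hh : ∀ j, 0 ≤ h j) (hs : Summable h) (x : ℝ) :
    Summable (fun j => if x ∈ gogSet (n j) (m j) then h j else 0) := by
  refine Summable.of_nonneg_of_le (fun j => ?_) (fun j => ?_) hs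
  · split_ifs; exacts [hh j, le_rfl]
  · split_ifs; exacts [le_rfl, hh j]

lemma gogFun_nonneg {n m : ℕ → ℕ} {h : ℕ → ℝ} (hh : ∀ j, 0 ≤ h j) (x : ℝ) :
    0 ≤ gogFun n m h x :=
  tsum_nonneg fun j => by split_ifs; exacts [hh j, le_rfl]

lemma gogFun_sum (Lam : ℕ → ℝ)
    (hLpos : ∀ i, 0 < Lam i) (hLmono : Monotone Lam) {n m : ℕ → ℕ} {h : ℕ → ℝ}
    (hh : ∀ j, 0 ≤ h j) (hs : Summable h)
    (hs2 : Summable (fun j => h j * ∑ i ∈ Finset.range (m j), 1 / Lam i))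
    {s : ℕ} (x : Fin s → ℝ) (hx : Function.Injective x) :
    ∑ i, gogFun n m h (x i) / Lam i ≤ ∑' j, h j * ∑ i ∈ Finset.range (m j), 1 / Lam i := by
  classical
  have e : ∑ i, gogFun n m h (x i) / Lam i
      = ∑' j, ∑ i, (if x i ∈ gogSet (n j) (m j) then h j else 0) / Lam i := by
    rw [Summable.tsum_finsetSum]
    · refine Finset.sum_congr rfl fun i _ => ?_
      rw [gogFun, tsum_div_const]
    · intro i _
      exact (gogFun_summable hh hs (x i)).div_const _
  rw [e]
  refine Summable.tsum_le_tsum (fun j => ?_) ?_ hs2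
  · have e2 : ∑ i, (if x i ∈ gogSet (n j) (m j) then h j else 0) / Lam i
        = h j * ∑ i ∈ (Finset.univ.filter fun i => x i ∈ gogSet (n j) (m j)).map Fin.valEmbedding,
          1 / Lam i := by
      rw [Finset.sum_map, Finset.sum_filter, Finset.mul_sum]
      refine Finset.sum_congr rfl fun i _ => ?_
      split_ifs <;> simp [div_eq_mul_inv]
    rw [e2]
    refine mul_le_mul_of_nonneg_left (gog_subsum Lam hLpos hLmono _ _ ?_) (hh j)
    rw [Finset.card_map]
    refine le_trans ?_ (gogSet_card (n j) (m j))
    exact Finset.card_le_card_of_injOn x (fun i hi => by simpa using hi) hx.injOn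
  · exact summable_sum fun i _ => (gogFun_summable hh hs (x i)).div_const _

lemma gogFun_lamVar (Lam : ℕ → ℝ)
    (hLpos : ∀ i, 0 < Lam i) (hLmono : Monotone Lam) {n m : ℕ → ℕ} {h : ℕ → ℝ}
    (hh : ∀ j, 0 ≤ h j) (hs : Summable h)
    (hs2 : Summable (fun j => h j * ∑ i ∈ Finset.range (m j), 1 / Lam i)) :
    lamVar Lam (gogFun n m h) < ⊤ := by
  set T := ∑' j, h j * ∑ i ∈ Finset.range (m j), 1 / Lam i
  refine lt_of_le_of_lt (b := ENNReal.ofReal (T + T)) ?_ ENNReal.ofReal_lt_top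
  refine iSup_le fun s => iSup_le fun I => iSup_le fun hI => ENNReal.ofReal_le_ofReal ?_
  have inj1 : Function.Injective fun i => (I i).1 := by
    intro i j hij
    by_contra hne
    have h1 := (hI.1 i).2.1
    have h2 := (hI.1 j).2.1
    simp only at hij
    rcases hI.2 i j hne with h | h <;> linarith
  have inj2 : Function.Injective fun i => (I i).2 := by
    intro i j hij
    by_contra hne
    have h1 := (hI.1 i).2.1
    have h2 := (hI.1 j).2.1
    simp only at hij
    rcases hI.2 i j hne with h | h <;> linarith
  refine le_trans ?_ (add_le_add (gogFun_sum (n := n) Lam hLpos hLmono hh hs hs2 _ inj2)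
    (gogFun_sum (n := n) Lam hLpos hLmono hh hs hs2 _ inj1))
  rw [← Finset.sum_add_distrib]
  refine Finset.sum_le_sum fun i _ => ?_
  rw [← add_div]
  refine div_le_div_of_nonneg_right ?_ (hLpos i).le
  have h1 := gogFun_nonneg (n := n) (m := m) hh (I i).1
  have h2 := gogFun_nonneg (n := n) (m := m) hh (I i).2
  rw [abs_le]
  constructor <;> linarith

lemma gogFun_wiener {q : ℕ → ℝ} (hqpos : ∀ n, 0 < q n) {n m : ℕ → ℕ} {h : ℕ → ℝ}
    (hh : ∀ j, 0 ≤ h j) (hs : Summable h) (j : ℕ) (hm : 4 * m j ≤ 2 ^ (n j + 1)) :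
    ENNReal.ofReal ((m j : ℝ) ^ (1 / q (n j)) * h j) ≤
      wienerVar q (fun n => (2 : ℝ) ^ n) (gogFun n m h) := by
  set I : Fin (m j) → ℝ × ℝ := fun i => (gogPt (n j) i, (4 * ((i : ℕ) : ℝ) + 3) / 2 ^ (n j + 1))
    with hIdef
  have hpos : (0:ℝ) < 2 ^ (n j + 1) := by positivity
  have hI : Nonoverlapping (m j) I := by
    refine ⟨fun i => ⟨?_, ?_, ?_⟩, ?_⟩
    · simp only [hIdef, gogPt]; positivity
    · simp only [hIdef, gogPt]
      refine div_lt_div_of_pos_right (by linarith) hpos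
    · simp only [hIdef]
      rw [div_le_one hpos]
      have : 4 * (i : ℕ) + 3 ≤ 2 ^ (n j + 1) := by have := i.2; omega
      exact_mod_cast this
    · have key : ∀ a b : Fin (m j), a < b → (I a).2 ≤ (I b).1 := by
        intro a b hab
        simp only [hIdef, gogPt]
        refine div_le_div_of_nonneg_right ?_ hpos.le
        have : 4 * (a : ℕ) + 3 ≤ 4 * (b : ℕ) + 1 := by have := Fin.lt_def.1 hab; omega
        exact_mod_cast this
      intro a b hab
      rcases lt_or_gt_of_ne hab with h | h
      · exact Or.inl (key a b h)
      · exact Or.inr (key b a h)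
  have hlen : ∀ k, 1 / (2:ℝ) ^ (n j) ≤ (I k).2 - (I k).1 := by
    intro k
    simp only [hIdef, gogPt]
    rw [← sub_div, pow_succ]
    field_simp
    linarith
  have hdiff : ∀ k, h j ≤ |gogFun n m h (I k).2 - gogFun n m h (I k).1| := by
    intro k
    have h0 : gogFun n m h (I k).2 = 0 := by
      have : ∀ l, (if (I k).2 ∈ gogSet (n l) (m l) then h l else 0) = 0 := by
        intro l
        rw [if_neg]
        intro hmem
        obtain ⟨i, -, hi⟩ := Finset.mem_image.1 hmem
        exact gog_parity _ _ _ _ hi.symm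
      simp only [gogFun, this, tsum_zero]
    have h1 : h j ≤ gogFun n m h (I k).1 := by
      have hle := (gogFun_summable (n := n) (m := m) hh hs (I k).1).le_tsum j
        (fun l _ => by split_ifs; exacts [hh l, le_rfl])
      rw [if_pos] at hle
      · exact hle
      · exact Finset.mem_image.2 ⟨k, Finset.mem_range.2 k.2, rfl⟩
    rw [h0, zero_sub, abs_neg]
    exact h1.trans (le_abs_self _)
  have hq0 := hqpos (n j)
  have hmain : (m j : ℝ) ^ (1 / q (n j)) * h j ≤
      (∑ k, |gogFun n m h (I k).2 - gogFun n m h (I k).1| ^ q (n j)) ^ (1 / q (n j)) := by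
    have e : (m j : ℝ) ^ (1 / q (n j)) * h j = (∑ _k : Fin (m j), h j ^ q (n j)) ^ (1 / q (n j)) := by
      rw [Finset.sum_const, Finset.card_univ, Fintype.card_fin, nsmul_eq_mul,
        Real.mul_rpow (by positivity) (Real.rpow_nonneg (hh j) _), ← Real.rpow_mul (hh j),
        mul_one_div_cancel hq0.ne', Real.rpow_one]
    rw [e]
    refine Real.rpow_le_rpow (Finset.sum_nonneg fun _ _ => Real.rpow_nonneg (hh j) _)
      (Finset.sum_le_sum fun k _ => Real.rpow_le_rpow (hh j) (hdiff k) hq0.le) (by positivity)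
  refine (ENNReal.ofReal_le_ofReal hmain).trans ?_
  unfold wienerVar
  refine le_iSup_of_le (n j) ?_
  refine le_iSup_of_le (m j) ?_
  refine le_iSup_of_le I ?_
  refine le_iSup_of_le hI ?_
  exact le_iSup_of_le hlen le_rfl

lemma gog_choose
    (Lam q : ℕ → ℝ)
    (hLpos : ∀ i, 0 < Lam i)
    (hqtop : Tendsto q atTop atTop)
    (hlim : ¬ Filter.limsup (fun n =>
        ⨆ (k : ℕ) (_ : 1 ≤ k) (_ : k ≤ 2 ^ n),
          ENNReal.ofReal ((k : ℝ) ^ (1 / q n) /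
            ∑ i ∈ Finset.range k, 1 / Lam i)) atTop < ⊤) (M : ℝ) (hM : 0 ≤ M) :
    ∃ n m : ℕ, 1 ≤ m ∧ 4 * m ≤ 2 ^ (n + 1) ∧
      M * ∑ i ∈ Finset.range m, 1 / Lam i ≤ (m : ℝ) ^ (1 / q n) := by
  have hlt : ENNReal.ofReal (2 * M) < Filter.limsup (fun n =>
        ⨆ (k : ℕ) (_ : 1 ≤ k) (_ : k ≤ 2 ^ n),
          ENNReal.ofReal ((k : ℝ) ^ (1 / q n) /
            ∑ i ∈ Finset.range k, 1 / Lam i)) atTop :=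
    lt_of_lt_of_le ENNReal.ofReal_lt_top (not_lt.1 hlim)
  have hfr := (frequently_lt_of_lt_limsup (h := hlt)).and_eventually
    ((hqtop.eventually_ge_atTop 1).and (eventually_ge_atTop 1))
  obtain ⟨n, h1, hq1, hn1⟩ := hfr.exists
  obtain ⟨k, h1⟩ := lt_iSup_iff.1 h1
  obtain ⟨hk1, h1⟩ := lt_iSup_iff.1 h1
  obtain ⟨hk2, h1⟩ := lt_iSup_iff.1 h1
  have h2 := (ENNReal.ofReal_lt_ofReal_iff_of_nonneg (by positivity)).1 h1
  have hS : 0 < ∑ i ∈ Finset.range k, 1 / Lam i :=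
    Finset.sum_pos (fun i _ => one_div_pos.2 (hLpos i)) ⟨0, Finset.mem_range.2 hk1⟩
  rw [lt_div_iff₀ hS] at h2
  obtain ⟨n, rfl⟩ : ∃ n', n = n' + 1 := ⟨n - 1, by omega⟩
  refine ⟨n + 1, (k + 1) / 2, by omega, ?_, ?_⟩
  · rw [pow_succ] at hk2 ⊢
    rw [pow_succ]
    omega
  · have hmono : ∑ i ∈ Finset.range ((k + 1) / 2), 1 / Lam i ≤ ∑ i ∈ Finset.range k, 1 / Lam i :=
      Finset.sum_le_sum_of_subset_of_nonneg (Finset.range_mono (by omega))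
        fun i _ _ => (one_div_pos.2 (hLpos i)).le
    set p := q (n + 1)
    have hp0 : 0 < p := by linarith
    have hk : (k : ℝ) ≤ 2 * (((k + 1) / 2 : ℕ) : ℝ) := by
      have : k ≤ 2 * ((k + 1) / 2) := by omega
      exact_mod_cast this
    have h3 : (k : ℝ) ^ (1 / p) ≤ 2 * (((k + 1) / 2 : ℕ) : ℝ) ^ (1 / p) := by
      calc (k : ℝ) ^ (1 / p) ≤ (2 * (((k + 1) / 2 : ℕ) : ℝ)) ^ (1 / p) :=
            Real.rpow_le_rpow (by positivity) hk (by positivity)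
        _ = 2 ^ (1 / p) * (((k + 1) / 2 : ℕ) : ℝ) ^ (1 / p) :=
            Real.mul_rpow (by norm_num) (by positivity)
        _ ≤ _ := by
            refine mul_le_mul_of_nonneg_right ?_ (by positivity)
            calc (2:ℝ) ^ (1 / p) ≤ 2 ^ (1:ℝ) :=
                  Real.rpow_le_rpow_of_exponent_le (by norm_num) ((div_le_one hp0).2 hq1)
              _ = 2 := Real.rpow_one 2
    have h4 := mul_le_mul_of_nonneg_left hmono hM
    linarith

lemma gog_forward
    (Lam q : ℕ → ℝ)
    (hLpos : ∀ i, 0 < Lam i) (hLmono : Monotone Lam)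
    (hqpos : ∀ n, 0 < q n)
    (hqtop : Tendsto q atTop atTop)
    (H : ∀ f : ℝ → ℝ, lamVar Lam f < ⊤ →
        wienerVar q (fun n => (2 : ℝ) ^ n) f < ⊤) :
      Filter.limsup (fun n =>
        ⨆ (k : ℕ) (_ : 1 ≤ k) (_ : k ≤ 2 ^ n),
          ENNReal.ofReal ((k : ℝ) ^ (1 / q n) /
            ∑ i ∈ Finset.range k, 1 / Lam i)) atTop < ⊤ := by
  by_contra hlim
  choose n m hm1 hm4 hM using fun j : ℕ =>
    gog_choose Lam q hLpos hqtop hlim ((4:ℝ) ^ j) (by positivity)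
  have hS : ∀ j, 0 < ∑ i ∈ Finset.range (m j), 1 / Lam i := fun j =>
    Finset.sum_pos (fun i _ => one_div_pos.2 (hLpos i)) ⟨0, Finset.mem_range.2 (hm1 j)⟩
  set h : ℕ → ℝ := fun j => (1 / 2) ^ j / ∑ i ∈ Finset.range (m j), 1 / Lam i with hdef
  have hh : ∀ j, 0 ≤ h j := fun j => div_nonneg (by positivity) (hS j).le
  have hgeo : Summable (fun j : ℕ => (1 / 2 : ℝ) ^ j) := summable_geometric_two
  have hs2 : Summable (fun j => h j * ∑ i ∈ Finset.range (m j), 1 / Lam i) := by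
    convert hgeo using 2 with j
    exact div_mul_cancel₀ _ (hS j).ne'
  have hs : Summable h := by
    refine Summable.of_nonneg_of_le hh (fun j => ?_) (hgeo.mul_right (Lam 0))
    simp only [hdef]
    rw [div_le_iff₀ (hS j), mul_assoc]
    refine le_mul_of_one_le_right (by positivity) ?_
    have : 1 / Lam 0 ≤ ∑ i ∈ Finset.range (m j), 1 / Lam i :=
      Finset.single_le_sum (f := fun i => 1 / Lam i)
        (fun i _ => (one_div_pos.2 (hLpos i)).le) (Finset.mem_range.2 (hm1 j))
    have h2 := mul_le_mul_of_nonneg_left this (hLpos 0).le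
    rwa [mul_one_div_cancel (hLpos 0).ne'] at h2
  have hW := H _ (gogFun_lamVar (n := n) Lam hLpos hLmono hh hs hs2)
  obtain ⟨N, hN⟩ := pow_unbounded_of_one_lt
    (wienerVar q (fun n => (2 : ℝ) ^ n) (gogFun n m h)).toReal (one_lt_two)
  have h1 := gogFun_wiener hqpos hh hs N (hm4 N)
  rw [ENNReal.ofReal_le_iff_le_toReal hW.ne] at h1
  have h2 : (2:ℝ) ^ N ≤ (m N : ℝ) ^ (1 / q (n N)) * h N := by
    simp only [hdef]
    rw [← mul_div_assoc, le_div_iff₀ (hS N)]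
    have h3 := mul_le_mul_of_nonneg_right (hM N) (show (0:ℝ) ≤ (1 / 2) ^ N by positivity)
    refine le_trans (le_of_eq ?_) h3
    have : (4:ℝ) ^ N * (1 / 2) ^ N = 2 ^ N := by rw [← mul_pow]; norm_num
    rw [← this]; ring
  linarith

/-- **Goginava's theorem.** If `q` is an increasing positive sequence with `q(n) → ∞` and
`δ(n) = 2^n`, then `ΛBV ⊆ BV(q;δ)` if and only if
`limsup_{n→∞} max_{1 ≤ k ≤ 2^n} k^{1/q(n)} / (∑_{i=1}^k 1/λ_i) < ∞`. -/
theorem goginava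
    (Lam q : ℕ → ℝ)
    (hLpos : ∀ i, 0 < Lam i) (hLmono : Monotone Lam)
    (hLdiv : Tendsto (fun n => ∑ i ∈ Finset.range n, 1 / Lam i) atTop atTop)
    (hqpos : ∀ n, 0 < q n) (hq : StrictMono q)
    (hqtop : Tendsto q atTop atTop) :
    (∀ f : ℝ → ℝ, lamVar Lam f < ⊤ →
        wienerVar q (fun n => (2 : ℝ) ^ n) f < ⊤) ↔
      Filter.limsup (fun n =>
        ⨆ (k : ℕ) (_ : 1 ≤ k) (_ : k ≤ 2 ^ n),
          ENNReal.ofReal ((k : ℝ) ^ (1 / q n) /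
            ∑ i ∈ Finset.range k, 1 / Lam i)) atTop < ⊤ := by
  exact ⟨gog_forward Lam q hLpos hLmono hqpos hqtop,
    fun h f hf => gog_backward Lam q hLpos hqpos hqtop h f hf⟩
end
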